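/- arXiv:2001.06484 — 3 statements merged into one kernel-verified Lean document; each statement's English description precedes it below -/
import Mathlib

section
/- Let G be a finite group with trivial Frattini subgroup. Then there exists a chief factor V of G and a nontrivial normal subgroup U of G such that I_G(V) = R_G(V) × U. -/
/-!
Definitions supporting the formalization of
"An upper bound on the Chebotarev invariant of a finite group" (Lucchini–Tracey).
-/

open scoped BigOperators

namespace ChebotarevPaper

/-- A `k`-tuple of elements of `G` invariably generates `G` if, replacing each entry by an
arbitrary conjugate, the resulting elements always generate `G`. -/
def InvGen (G : Type*) [Group G] {k : ℕ} (f : Fin k → G) : Prop :=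
  ∀ c : Fin k → G, Subgroup.closure (Set.range fun i => c i * f i * (c i)⁻¹) = ⊤

/-- The probability that `k` independent uniformly random elements of `G` invariably
generate `G`. -/
noncomputable def probInvGen (G : Type*) [Group G] (k : ℕ) : ℝ :=
  Nat.card {f : Fin k → G // InvGen G f} / (Nat.card G : ℝ) ^ k

/-- The Chebotarev invariant `C(G)`:  `C(G) = Σ_{k ≥ 0} (1 − P_I(G,k))`, where `P_I(G,k)`
is the probability that `k` independent uniformly random elements of `G` invariably
generate `G`. -/
noncomputable def cheb (G : Type*) [Group G] : ℝ :=
  ∑' k : ℕ, (1 - probInvGen G k)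

/-- The probability that `k` independent uniformly random elements of `G` generate `G`. -/
noncomputable def probGen (G : Type*) [Group G] (k : ℕ) : ℝ :=
  Nat.card {f : Fin k → G // Subgroup.closure (Set.range f) = ⊤} / (Nat.card G : ℝ) ^ k

/-- The expected number of uniformly random elements of `G` needed to generate `G`. -/
noncomputable def expectedGen (G : Type*) [Group G] : ℝ :=
  ∑' k : ℕ, (1 - probGen G k)

/-- `d(G)`: the minimal number of generators of `G`. -/
noncomputable def minGen (G : Type*) [Group G] : ℕ :=
  sInf {n | ∃ f : Fin n → G, Subgroup.closure (Set.range f) = ⊤}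

/-- `σ` has the defining property of the constant `σ = 2.118456563…` of Pomerance:
for every finite group `X`, the expected number of uniformly random elements needed to
generate `X` is at most `d(X) + σ`. -/
def IsPomeranceConst (σ : ℝ) : Prop :=
  ∀ (X : Type) [Group X] [Finite X], expectedGen X ≤ minGen X + σ

variable (G : Type*) [Group G]

/-- `(X, Y)` is a chief factor of `G`:  both are normal in `G`, `Y < X`, and no normal
subgroup of `G` lies strictly between them (i.e. `X/Y` is a minimal normal subgroup of
`G/Y`). -/
def IsChiefFactorPair (X Y : Subgroup G) : Prop :=
  X.Normal ∧ Y.Normal ∧ Y < X ∧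
    ∀ N : Subgroup G, N.Normal → Y ≤ N → N ≤ X → N = Y ∨ N = X

/-- The chief factor `X/Y` is complemented: there is `U ≤ G` with `UX = G` and
`U ⊓ X = Y`. -/
def IsComplementedFactor (X Y : Subgroup G) : Prop :=
  ∃ U : Subgroup G, U ⊔ X = ⊤ ∧ U ⊓ X = Y

/-- The chief factor `X/Y` is a Frattini chief factor, i.e. `X/Y ≤ Frat(G/Y)`;
equivalently (and this is how we state it), `X/Y` is abelian and has no complement
in `G`. -/
def IsFrattiniFactor (X Y : Subgroup G) : Prop :=
  (∀ a b : G, a ∈ X → b ∈ X → a * b * a⁻¹ * b⁻¹ ∈ Y) ∧ ¬ IsComplementedFactor G X Y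

/-- The chief factor `X/Y` is central in `G`, i.e. `X/Y ≤ Z(G/Y)`. -/
def IsCentralFactor (X Y : Subgroup G) : Prop :=
  ∀ g x : G, x ∈ X → g * x * g⁻¹ * x⁻¹ ∈ Y

/-- The `G`-group `V` (a group with an action `a : G →* MulAut V` of `G` by automorphisms)
is `G`-isomorphic to the chief factor `X/Y` (on which `G` acts by conjugation): there is a
surjective homomorphism `X →* V` with kernel `Y` transforming conjugation by `g ∈ G` into
the action of `g` on `V`. -/
def RepresentsFactor {V : Type*} [Group V] (a : G →* MulAut V) (X Y : Subgroup G) : Prop :=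
  ∃ f : X →* V, Function.Surjective f ∧ (∀ x : X, f x = 1 ↔ (x : G) ∈ Y) ∧
    ∀ (g : G) (x y : X), (y : G) = g * (x : G) * g⁻¹ → f y = a g (f x)

/-- Two `G`-groups `(V₁, a₁)`, `(V₂, a₂)` are `G`-equivalent: there are isomorphisms
`φ : V₁ ≃* V₂` and `Φ : V₁ ⋊ G ≃* V₂ ⋊ G` making the natural diagram of the two
extensions `1 → Vᵢ → Vᵢ ⋊ G → G → 1` commute. -/
def GEquiv {V₁ V₂ : Type*} [Group V₁] [Group V₂]
    (a₁ : G →* MulAut V₁) (a₂ : G →* MulAut V₂) : Prop :=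
  ∃ (φ : V₁ ≃* V₂) (Φ : (V₁ ⋊[a₁] G) ≃* (V₂ ⋊[a₂] G)),
    (∀ v : V₁, Φ (SemidirectProduct.inl v) = SemidirectProduct.inl (φ v)) ∧
    ∀ x, (Φ x).right = x.right

/-- `G`-isomorphism of `G`-groups. -/
def GIso {V₁ V₂ : Type*} [Group V₁] [Group V₂]
    (a₁ : G →* MulAut V₁) (a₂ : G →* MulAut V₂) : Prop :=
  ∃ φ : V₁ ≃* V₂, ∀ (g : G) (v : V₁), φ (a₁ g v) = a₂ g (φ v)

/-- `N` is a minimal normal subgroup of `G`. -/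
def IsMinimalNormal (N : Subgroup G) : Prop :=
  N.Normal ∧ N ≠ ⊥ ∧ ∀ M : Subgroup G, M.Normal → M ≠ ⊥ → M ≤ N → M = N

/-- The socle of `G`: the subgroup generated by all minimal normal subgroups of `G`. -/
def socle : Subgroup G := sSup {N : Subgroup G | IsMinimalNormal G N}

instance socle_normal : (socle G).Normal := by
  constructor
  intro n hn g
  have h : socle G ≤ (socle G).comap (MulAut.conj g).toMonoidHom := by
    rw [socle]
    apply sSup_le
    intro N hN x hx
    have h1 : (MulAut.conj g).toMonoidHom x ∈ N := by
      simpa [MulAut.conj_apply] using hN.1.conj_mem x hx g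
    exact Subgroup.mem_comap.2 (le_sSup hN h1)
  have h2 := h hn
  simpa [MulAut.conj_apply] using h2

/-- The action of `G` (by conjugation, through `f : G →* Q`) on the socle of `Q`. -/
def socAct {Q : Type*} [Group Q] (f : G →* Q) : G →* MulAut (socle Q) :=
  MulAut.conjNormal.comp f

/-- The diagonal action of `G` on `V × V` induced by an action on `V`. -/
def prodAct {V : Type*} [Group V] (a : G →* MulAut V) : G →* MulAut (V × V) where
  toFun g := MulEquiv.prodCongr (a g) (a g)
  map_one' := by
    ext x <;> simp [MulEquiv.prodCongr, MulAut.one_apply]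
  map_mul' g h := by
    ext x <;> simp [MulEquiv.prodCongr, MulAut.mul_apply]

/-- The diagonal action of `H` on `V^u` induced by an action on `V`. -/
def diagAct (H : Type*) [Group H] {V : Type*} [Group V] (b : H →* MulAut V) (u : ℕ) :
    H →* MulAut (Fin u → V) where
  toFun g := MulEquiv.piCongrRight fun _ => b g
  map_one' := by
    ext x i; simp
  map_mul' g h := by
    ext x i; simp [MulAut.mul_apply]

variable {G}

/-- The elements `gs 0, …, gs (k-1)` of `G` satisfy the `V`-property in `G`: they all lie
in the union of the `G`-conjugates of some maximal subgroup `M` of `G` such that the socle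
of `G/core_G(M)` is `G`-equivalent to `V` or to `V × V`. -/
def SatisfyVProperty {V : Type*} [Group V] (a : G →* MulAut V) {k : ℕ}
    (gs : Fin k → G) : Prop :=
  ∃ M : Subgroup G, IsCoatom M ∧
    (GEquiv G (socAct G (QuotientGroup.mk' M.normalCore)) a ∨
      GEquiv G (socAct G (QuotientGroup.mk' M.normalCore)) (prodAct G a)) ∧
    ∀ i, ∃ x : G, x * gs i * x⁻¹ ∈ M

/-- `P*_{G,V}(k)`: the probability that `k` independent uniformly random elements of `G`
satisfy the `V`-property in `G`. -/
noncomputable def pStar {V : Type*} [Group V] (a : G →* MulAut V) (k : ℕ) : ℝ :=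
  Nat.card {gs : Fin k → G // SatisfyVProperty a gs} / (Nat.card G : ℝ) ^ k

/-- The collection of normal subgroups `N` of `G` such that `G/N` is isomorphic to the
monolithic primitive group `L_V` associated to `V` (that is, `V ⋊ (G/C_G(V))` if `V` is
abelian and `G/C_G(V)` otherwise; here `C_G(V)` is the kernel of the action of `G` on
`V`) and the socle of `G/N` is `G`-equivalent to `V`. -/
def crownNormals {V : Type*} [Group V] (a : G →* MulAut V) : Set (Subgroup G) :=
  {N | ∃ _ : N.Normal,
    ((∀ x y : V, x * y = y * x) →
      Nonempty ((G ⧸ N) ≃* (V ⋊[QuotientGroup.kerLift a] (G ⧸ a.ker)))) ∧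
    (¬ (∀ x y : V, x * y = y * x) → Nonempty ((G ⧸ N) ≃* (G ⧸ a.ker))) ∧
    GEquiv G (socAct G (QuotientGroup.mk' N)) a}

/-- `R_G(V)`: the intersection of all normal subgroups `N` of `G` with `G/N ≅ L_V` and
`soc(G/N)` `G`-equivalent to `V`. -/
def crownRadical {V : Type*} [Group V] (a : G →* MulAut V) : Subgroup G :=
  sInf (crownNormals a)

instance crownRadical_normal {V : Type*} [Group V] (a : G →* MulAut V) :
    (crownRadical a).Normal := by
  constructor
  intro n hn g
  rw [crownRadical, Subgroup.mem_sInf] at hn ⊢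
  intro p hp
  obtain ⟨hpN, hrest⟩ := hp
  exact hpN.conj_mem n (hn p ⟨hpN, hrest⟩) g

/-- `I_G(V)`: the preimage in `G` of the socle of `G/R_G(V)`; the `V`-crown of `G` is
`I_G(V)/R_G(V)`. -/
def crownSocle {V : Type*} [Group V] (a : G →* MulAut V) : Subgroup G :=
  (socle (G ⧸ crownRadical a)).comap (QuotientGroup.mk' (crownRadical a))

/-- A chief series of `G`: a chain `⊥ = N_0 < N_1 < … < N_len = ⊤` of normal subgroups
of `G` in which each factor `N_{i+1}/N_i` is a chief factor of `G`. -/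
structure ChiefSeries (G : Type*) [Group G] where
  len : ℕ
  ser : Fin (len + 1) → Subgroup G
  bot_eq : ser 0 = ⊥
  top_eq : ser (Fin.last len) = ⊤
  chief : ∀ i : Fin len, IsChiefFactorPair G (ser i.succ) (ser i.castSucc)

/-- `δ_V(G)` (for a `G`-module `V`): the number of complemented factors in the chief
series `S` of `G` which are `G`-isomorphic to `V`. -/
noncomputable def deltaIso {V : Type*} [Group V] (a : G →* MulAut V)
    (S : ChiefSeries G) : ℕ :=
  Nat.card {i : Fin S.len //
    IsComplementedFactor G (S.ser i.succ) (S.ser i.castSucc) ∧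
    RepresentsFactor G a (S.ser i.succ) (S.ser i.castSucc)}

/-- The chief factor `X/Y` of `G` is `G`-equivalent to the `G`-group `(V, a)`. -/
def FactorGEquiv (X Y : Subgroup G) {V : Type*} [Group V] (a : G →* MulAut V) : Prop :=
  ∃ (W : Type) (_ : Group W) (b : G →* MulAut W),
    RepresentsFactor G b X Y ∧ GEquiv G b a

/-- `δ_V(G)` (for a `G`-group `V`): the number of non-Frattini factors in the chief
series `S` of `G` which are `G`-equivalent to `V`. -/
noncomputable def deltaEquiv {V : Type*} [Group V] (a : G →* MulAut V)
    (S : ChiefSeries G) : ℕ :=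
  Nat.card {i : Fin S.len //
    ¬ IsFrattiniFactor G (S.ser i.succ) (S.ser i.castSucc) ∧
    FactorGEquiv (S.ser i.succ) (S.ser i.castSucc) a}

/-- Bundled `G`-group: a group together with an action of `G` by automorphisms. -/
structure GGroup (G : Type) [Group G] : Type 1 where
  carrier : Type
  [grp : Group carrier]
  act : G →* MulAut carrier

attribute [instance] GGroup.grp

/-- The action `b` of `H` on `V` is irreducible: `V` is nontrivial and has no proper
nontrivial (normal) `H`-invariant subgroup. -/
def IsIrreducibleGGroup (H : Type*) [Group H] {V : Type*} [Group V]
    (b : H →* MulAut V) : Prop :=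
  Nontrivial V ∧
    ∀ W : Subgroup V, W.Normal → (∀ (h : H) (v : V), v ∈ W → b h v ∈ W) → W = ⊥ ∨ W = ⊤

/-- The `H`-equivariant endomorphisms of `V` (for `H`-modules `V` this is
`End_H(V)`). -/
def EquivEnd (H : Type*) [Group H] {V : Type*} [Group V] (b : H →* MulAut V) :=
  {f : V →* V // ∀ (h : H) (v : V), f (b h v) = b h (f v)}

/-- `q_V := |End_H(V)|`. -/
noncomputable def endCard (H : Type*) [Group H] {V : Type*} [Group V]
    (b : H →* MulAut V) : ℕ :=
  Nat.card (EquivEnd H b)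

/-- `n_V := dim_{End_H(V)} V`, characterised by `|End_H(V)| ^ n_V = |V|` (for a finite
irreducible `H`-module `V`, `End_H(V)` is a field and `V` a vector space over it). -/
noncomputable def dimEnd (H : Type*) [Group H] {V : Type*} [Group V]
    (b : H →* MulAut V) : ℕ :=
  sInf {n : ℕ | endCard H b ^ n = Nat.card V}

/-- The set of derivations `ζ : H → V` (satisfying `ζ(h₁h₂) = ζ(h₁)^{h₂} · ζ(h₂)`). -/
def DerSet (H : Type*) [Group H] {V : Type*} [Group V] (b : H →* MulAut V) :
    Set (H → V) :=
  {ζ | ∀ h₁ h₂ : H, ζ (h₁ * h₂) = b h₂ (ζ h₁) * ζ h₂}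

/-- The set of inner derivations `h ↦ [h,v] = v^h · v⁻¹`. -/
def IderSet (H : Type*) [Group H] {V : Type*} [Group V] (b : H →* MulAut V) :
    Set (H → V) :=
  {ζ | ∃ v : V, ∀ h : H, ζ h = b h v * v⁻¹}

/-- `m := dim_{End_H(V)} H¹(H,V)` where `H¹(H,V) = Der(H,V)/Ider(H,V)`, characterised by
`|End_H(V)| ^ m · |Ider(H,V)| = |Der(H,V)|`. -/
noncomputable def h1Dim (H : Type*) [Group H] {V : Type*} [Group V]
    (b : H →* MulAut V) : ℕ :=
  sInf {m : ℕ | endCard H b ^ m * Nat.card (IderSet H b) = Nat.card (DerSet H b)}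

/-- The probability that a uniformly random element of `H` fixes a nonzero (i.e.
non-identity) vector of `V`. -/
noncomputable def fixProb (H : Type*) [Group H] {V : Type*} [Group V]
    (b : H →* MulAut V) : ℝ :=
  Nat.card {h : H // ∃ v : V, v ≠ 1 ∧ b h v = v} / (Nat.card H : ℝ)

/-- `A` is a set of representatives for the irreducible `G`-modules which are
`G`-isomorphic to a chief factor of `G` satisfying `P`:  every member of `A` is an
irreducible abelian `G`-group `G`-isomorphic to some chief factor satisfying `P`, and
every chief factor of `G` satisfying `P` is `G`-isomorphic to exactly one member
of `A`. -/
def IsModuleRepSet {G : Type} [Group G] (P : Subgroup G → Subgroup G → Prop)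
    (A : Finset (GGroup G)) : Prop :=
  (∀ V ∈ A, (∀ x y : V.carrier, x * y = y * x) ∧ IsIrreducibleGGroup G V.act ∧
      ∃ X Y : Subgroup G, IsChiefFactorPair G X Y ∧ P X Y ∧ RepresentsFactor G V.act X Y) ∧
  ∀ X Y : Subgroup G, IsChiefFactorPair G X Y → P X Y →
    ∃! V : GGroup G, V ∈ A ∧ RepresentsFactor G V.act X Y

/-- `A` is a set of representatives for the irreducible `G`-groups which are
`G`-equivalent to a chief factor of `G` satisfying `P`. -/
def IsGGroupRepSet {G : Type} [Group G] (P : Subgroup G → Subgroup G → Prop)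
    (A : Finset (GGroup G)) : Prop :=
  (∀ V ∈ A, IsIrreducibleGGroup G V.act ∧
      ∃ X Y : Subgroup G, IsChiefFactorPair G X Y ∧ P X Y ∧ FactorGEquiv X Y V.act) ∧
  ∀ X Y : Subgroup G, IsChiefFactorPair G X Y → P X Y →
    ∃! V : GGroup G, V ∈ A ∧ FactorGEquiv X Y V.act

/-! ### Helper material for the proof -/

/-- Auxiliary: `I/M` is a chief factor whose centralizer lies in `I`. -/
def WeakCrown (I M : Subgroup G) : Prop :=
  IsChiefFactorPair G I M ∧ ∀ t : G, (∀ x ∈ I, t * x * t⁻¹ * x⁻¹ ∈ M) → t ∈ I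

theorem exists_minimalNormal_le [Finite G] (H : Subgroup G) (hH : H.Normal) (hne : H ≠ ⊥) :
    ∃ N : Subgroup G, IsMinimalNormal G N ∧ N ≤ H := by
  obtain ⟨N, hNle, hN⟩ := (Set.toFinite {K : Subgroup G | K.Normal ∧ K ≠ ⊥}).exists_le_minimal
    (show H ∈ {K : Subgroup G | K.Normal ∧ K ≠ ⊥} from ⟨hH, hne⟩)
  refine ⟨N, ⟨hN.1.1, hN.1.2, fun M hM hMne hMN => le_antisymm hMN (hN.2 ⟨hM, hMne⟩ hMN)⟩, hNle⟩

theorem exists_abelian_complement [Finite G] (hfrat : frattini G = ⊥) (A : Subgroup G)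
    (hA : A.Normal) (hcomm : ∀ x ∈ A, ∀ y ∈ A, x * y = y * x) :
    ∃ H : Subgroup G, H ⊔ A = ⊤ ∧ H ⊓ A = ⊥ := by
  obtain ⟨H, -, hH⟩ := (Set.toFinite {K : Subgroup G | K ⊔ A = ⊤}).exists_le_minimal
    (show (⊤ : Subgroup G) ∈ {K : Subgroup G | K ⊔ A = ⊤} by simp)
  have hHA : H ⊔ A = ⊤ := hH.1
  refine ⟨H, hHA, ?_⟩
  have hn : (H ⊓ A).Normal := by
    constructor
    intro x hx g
    have hg : g ∈ H ⊔ A := by rw [hHA]; trivial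
    obtain ⟨h, hh, b, hb, rfl⟩ := Subgroup.mem_sup_of_normal_right.1 hg
    have e : h * b * x * (h * b)⁻¹ = h * x * h⁻¹ := by
      have := hcomm b hb x hx.2
      calc h * b * x * (h * b)⁻¹ = h * (b * x) * b⁻¹ * h⁻¹ := by group
        _ = h * x * h⁻¹ := by rw [this]; group
    rw [e]
    exact ⟨H.mul_mem (H.mul_mem hh hx.1) (H.inv_mem hh), hA.conj_mem x hx.2 h⟩
  rw [eq_bot_iff, ← hfrat, frattini, Order.radical]
  refine le_iInf₂ fun M hM => ?_
  by_contra hle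
  have hM' : IsCoatom M := hM
  have htop : M ⊔ (H ⊓ A) = ⊤ := by
    apply hM'.2
    exact lt_of_le_of_ne le_sup_left fun h => hle (h ▸ le_sup_right)
  have hmem : (M ⊓ H) ⊔ A = ⊤ := by
    rw [eq_top_iff, ← hHA]
    refine sup_le (fun h hh => ?_) le_sup_right
    have hh' : h ∈ M ⊔ (H ⊓ A) := by rw [htop]; trivial
    obtain ⟨m, hm, b, hb, rfl⟩ := Subgroup.mem_sup_of_normal_right.1 hh'
    have : m ∈ H := by simpa using H.mul_mem hh (H.inv_mem hb.1)
    exact Subgroup.mul_mem_sup ⟨hm, this⟩ hb.2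
  have := hH.2 hmem inf_le_right
  exact hle (inf_le_left.trans (this.trans inf_le_left))

theorem minimal_inf {N H : Subgroup G} (hN : IsMinimalNormal G N) (hH : H.Normal) :
    N ≤ H ∨ N ⊓ H = ⊥ := by
  by_cases h : N ⊓ H = ⊥
  · exact Or.inr h
  · left
    haveI := hN.1
    have := hN.2.2 (N ⊓ H) inferInstance h inf_le_left
    exact inf_eq_left.1 this

theorem commute_of_inf {A B : Subgroup G} (hA : A.Normal) (hB : B.Normal) (h : A ⊓ B = ⊥)
    {x y : G} (hx : x ∈ A) (hy : y ∈ B) : x * y = y * x :=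
  Subgroup.commute_of_normal_of_disjoint A B hA hB (disjoint_iff.2 h) x y hx hy

theorem le_centralizer_of_inf {A B : Subgroup G} (hA : A.Normal) (hB : B.Normal)
    (h : A ⊓ B = ⊥) : A ≤ Subgroup.centralizer (B : Set G) := fun _ hx =>
  Subgroup.mem_centralizer_iff.2 fun _ hy => (commute_of_inf hA hB h hx hy).symm

theorem centralizer_socle_le [Finite G] (hfrat : frattini G = ⊥) :
    Subgroup.centralizer (socle G : Set G) ≤ socle G := by
  set S := socle G with hS
  set K := Subgroup.centralizer (S : Set G) with hK
  obtain ⟨H, hH1, hH2⟩ := exists_abelian_complement hfrat (K ⊓ S) inferInstance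
    (fun x hx y hy => (Subgroup.mem_centralizer_iff.1 hx.1 y hy.2).symm)
  have hn : (K ⊓ H).Normal := by
    constructor
    intro x hx g
    have hg : g ∈ H ⊔ (K ⊓ S) := by rw [hH1]; trivial
    obtain ⟨h, hh, b, hb, rfl⟩ := Subgroup.mem_sup_of_normal_right.1 hg
    have e : h * b * x * (h * b)⁻¹ = h * x * h⁻¹ := by
      have := Subgroup.mem_centralizer_iff.1 hx.1 b hb.2
      calc h * b * x * (h * b)⁻¹ = h * (b * x) * b⁻¹ * h⁻¹ := by group
        _ = h * x * h⁻¹ := by rw [this]; group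
    rw [e]
    exact ⟨Subgroup.Normal.conj_mem inferInstance x hx.1 h,
      H.mul_mem (H.mul_mem hh hx.2) (H.inv_mem hh)⟩
  have hbot : K ⊓ H = ⊥ := by
    by_contra hne
    obtain ⟨N, hN, hle⟩ := exists_minimalNormal_le _ hn hne
    have h1 : N ≤ S := le_sSup hN
    apply hN.2.1
    rw [eq_bot_iff, ← hH2]
    exact le_inf (hle.trans inf_le_right) (le_inf (hle.trans inf_le_left) h1)
  intro k hk
  have hg : k ∈ H ⊔ (K ⊓ S) := by rw [hH1]; trivial
  obtain ⟨h, hh, b, hb, rfl⟩ := Subgroup.mem_sup_of_normal_right.1 hg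
  have h1 : h ∈ K := by simpa using K.mul_mem hk (K.inv_mem hb.1)
  have h2 : h ∈ (⊥ : Subgroup G) := hbot ▸ (⟨h1, hh⟩ : h ∈ K ⊓ H)
  rw [Subgroup.mem_bot] at h2
  simpa [h2] using hb.2

theorem weak_exists_smaller [Finite G] (hfrat : frattini G = ⊥) {I M : Subgroup G}
    (hw : WeakCrown I M) (hS : socle G ≤ M) :
    ∃ N : Subgroup G, IsMinimalNormal G N ∧ N ⊔ Subgroup.centralizer (N : Set G) < I := by
  obtain ⟨⟨hI, hM, hlt, hch⟩, hcent⟩ := hw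
  obtain ⟨D, hDI, hD⟩ := (Set.toFinite {K : Subgroup G | K.Normal ∧ K ≤ I ∧ ¬ K ≤ M}).exists_le_minimal
    (show I ∈ {K : Subgroup G | K.Normal ∧ K ≤ I ∧ ¬ K ≤ M} from ⟨hI, le_rfl, not_le_of_gt hlt⟩)
  obtain ⟨⟨hDn, -, hDM⟩, hmin⟩ := hD
  have hex : ∃ N, IsMinimalNormal G N ∧ ¬ D ≤ Subgroup.centralizer (N : Set G) := by
    by_contra hno
    push Not at hno
    apply hDM
    refine le_trans ?_ ((centralizer_socle_le hfrat).trans hS)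
    rw [Subgroup.le_centralizer_iff]
    refine sSup_le fun N hN => ?_
    rw [← Subgroup.le_centralizer_iff]
    exact hno N hN
  obtain ⟨N, hN, hDN⟩ := hex
  have hNn := hN.1
  have hNM : N ≤ M := (le_sSup hN : N ≤ socle G).trans hS
  set E := Subgroup.centralizer (N : Set G) with hE
  have hDE : D ⊓ E ≤ M := by
    by_contra h
    exact hDN ((hmin ⟨inferInstance, inf_le_left.trans hDI, h⟩ inf_le_left).trans inf_le_right)
  have hDMI : D ⊔ M = I := by
    rcases hch (D ⊔ M) inferInstance le_sup_right (sup_le hDI hlt.le) with h | h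
    · exact absurd (h ▸ le_sup_left) hDM
    · exact h
  have hEI : E ≤ I := by
    intro t ht
    apply hcent
    intro x hx
    rw [← hDMI] at hx
    obtain ⟨d, hd, m, hm, rfl⟩ := Subgroup.mem_sup_of_normal_right.1 hx
    have h1 : t * d * t⁻¹ * d⁻¹ ∈ M := by
      apply hDE
      refine ⟨D.mul_mem (hDn.conj_mem d hd t) (D.inv_mem hd), ?_⟩
      have := E.mul_mem ht ((inferInstance : E.Normal).conj_mem t⁻¹ (E.inv_mem ht) d)
      simpa [mul_assoc] using this
    have h2 : d * (t * m * t⁻¹ * m⁻¹) * d⁻¹ ∈ M :=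
      hM.conj_mem _ (M.mul_mem (hM.conj_mem m hm t) (M.inv_mem hm)) d
    have := M.mul_mem h1 h2
    have e : t * d * t⁻¹ * d⁻¹ * (d * (t * m * t⁻¹ * m⁻¹) * d⁻¹)
      = t * (d * m) * t⁻¹ * (d * m)⁻¹ := by group
    rwa [e] at this
  refine ⟨N, hN, lt_of_le_of_ne (sup_le (hNM.trans hlt.le) hEI) fun heq => ?_⟩
  rcases minimal_inf hN hDn with h | h
  · apply hDM
    intro d hd
    have hd' : d ∈ N ⊔ E := heq ▸ hDI hd
    obtain ⟨n, hn, e, he, rfl⟩ := Subgroup.mem_sup_of_normal_right.1 hd'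
    refine M.mul_mem (hNM hn) (hDE ⟨?_, he⟩)
    simpa using D.mul_mem (D.inv_mem (h hn)) hd
  · exact hDN (le_centralizer_of_inf hDn hNn (inf_comm N D ▸ h))

theorem exists_complement_finset (I : Subgroup G) (hI : I.Normal)
    (hsoc : socle G ≤ I)
    (hkey : ∀ M, WeakCrown I M → ¬ socle G ≤ M) (s : Finset (Subgroup G))
    (hs : ∀ M ∈ s, WeakCrown I M) :
    ∃ U : Subgroup G, U.Normal ∧ U ≤ socle G ∧ U ⊔ (I ⊓ s.inf id) = I ∧
      U ⊓ (I ⊓ s.inf id) = ⊥ := by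
  classical
  induction s using Finset.induction_on with
  | empty => exact ⟨⊥, inferInstance, bot_le, by simp, by simp⟩
  | insert M s _ ih =>
    obtain ⟨U, hUn, hUS, hsup, hinf⟩ := ih fun M hM => hs M (Finset.mem_insert_of_mem hM)
    have hsN : (s.inf id).Normal := by
      have : ∀ t : Finset (Subgroup G), (∀ M ∈ t, M.Normal) → (t.inf id).Normal := by
        intro t
        induction t using Finset.induction_on with
        | empty => intro _; simpa using (inferInstance : (⊤ : Subgroup G).Normal)
        | insert A t _ ih =>
          intro h
          rw [Finset.inf_insert]
          haveI := ih fun M hM => h M (Finset.mem_insert_of_mem hM)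
          haveI := h A (Finset.mem_insert_self _ _)
          exact (inferInstance : (A ⊓ t.inf id).Normal)
      exact this s fun M hM => (hs M (Finset.mem_insert_of_mem hM)).1.2.1
    obtain ⟨⟨-, hM, hlt, hch⟩, hcent⟩ := hs M (Finset.mem_insert_self _ _)
    have hDe : I ⊓ (insert M s).inf id = (I ⊓ s.inf id) ⊓ M := by
      rw [Finset.inf_insert, id, inf_comm M, inf_assoc]
    rw [hDe]
    have hDn : (I ⊓ s.inf id).Normal := inferInstance
    have hDI : I ⊓ s.inf id ≤ I := inf_le_left
    generalize I ⊓ s.inf id = D at *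
    by_cases hDM : D ≤ M
    · rw [inf_eq_left.2 hDM]; exact ⟨U, hUn, hUS, hsup, hinf⟩
    have hUI : U ≤ I := hUS.trans hsoc
    have hDMI : D ⊔ M = I := by
      rcases hch (D ⊔ M) inferInstance le_sup_right (sup_le hDI hlt.le) with h | h
      · exact absurd (h ▸ le_sup_left) hDM
      · exact h
    set M' := U ⊔ (D ⊓ M) with hM'
    have hM'D : ∀ x ∈ M', x ∈ D → x ∈ M := by
      intro x hx hxD
      obtain ⟨u, hu, d, hd, rfl⟩ := Subgroup.mem_sup_of_normal_right.1 hx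
      have hu' : u ∈ D := by simpa using D.mul_mem hxD (D.inv_mem hd.1)
      have : u ∈ (⊥ : Subgroup G) := hinf ▸ (⟨hu, hu'⟩ : u ∈ U ⊓ D)
      rw [Subgroup.mem_bot] at this
      simpa [this] using hd.2
    have hM'I : M' ≤ I := sup_le hUI (inf_le_left.trans hDI)
    have hweak : WeakCrown I M' := by
      refine ⟨⟨hI, inferInstance, lt_of_le_of_ne hM'I fun h => ?_, ?_⟩, ?_⟩
      · exact hDM fun x hx => hM'D x (h ▸ hDI hx) hx
      · intro T hT hM'T hTI
        have hUT : U ≤ T := le_sup_left.trans hM'T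
        have hTdec : T ≤ U ⊔ (T ⊓ D) := by
          intro t ht
          have : t ∈ U ⊔ D := hsup ▸ hTI ht
          obtain ⟨u, hu, d, hd, rfl⟩ := Subgroup.mem_sup_of_normal_right.1 this
          refine Subgroup.mul_mem_sup hu ⟨?_, hd⟩
          simpa using T.mul_mem (T.inv_mem (hUT hu)) ht
        rcases hch ((T ⊓ D) ⊔ M) inferInstance le_sup_right
          (sup_le (inf_le_left.trans hTI) hlt.le) with h | h
        · left
          refine le_antisymm (hTdec.trans (sup_le_sup_left ?_ _)) hM'T
          exact le_inf inf_le_right (h ▸ le_sup_left)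
        · right
          refine le_antisymm hTI ?_
          rw [← hsup]
          refine sup_le hUT fun d hd => ?_
          have : d ∈ (T ⊓ D) ⊔ M := h ▸ hDI hd
          obtain ⟨t, ht, m, hm, rfl⟩ := Subgroup.mem_sup_of_normal_right.1 this
          refine T.mul_mem ht.1 (hM'T (Subgroup.mem_sup_right ⟨?_, hm⟩))
          simpa using D.mul_mem (D.inv_mem ht.2) hd
      · intro t ht
        apply hcent
        intro x hx
        rw [← hDMI] at hx
        obtain ⟨d, hd, m, hm, rfl⟩ := Subgroup.mem_sup_of_normal_right.1 hx
        have h1 : t * d * t⁻¹ * d⁻¹ ∈ M :=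
          hM'D _ (ht d (hDI hd)) (D.mul_mem (hDn.conj_mem d hd t) (D.inv_mem hd))
        have h2 : d * (t * m * t⁻¹ * m⁻¹) * d⁻¹ ∈ M :=
          hM.conj_mem _ (M.mul_mem (hM.conj_mem m hm t) (M.inv_mem hm)) d
        have := M.mul_mem h1 h2
        have e : t * d * t⁻¹ * d⁻¹ * (d * (t * m * t⁻¹ * m⁻¹) * d⁻¹)
          = t * (d * m) * t⁻¹ * (d * m)⁻¹ := by group
        rwa [e] at this
    have hex : ∃ N, IsMinimalNormal G N ∧ ¬ N ≤ M' := by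
      by_contra hno
      push Not at hno
      exact hkey M' hweak (sSup_le hno)
    obtain ⟨N, hN, hNM'⟩ := hex
    have hNn := hN.1
    have hNS : N ≤ socle G := le_sSup hN
    have hNinf : N ⊓ M' = ⊥ := (minimal_inf hN hweak.1.2.1).resolve_left hNM'
    refine ⟨U ⊔ N, inferInstance, sup_le hUS hNS, ?_, ?_⟩
    · have e : U ⊔ N ⊔ D ⊓ M = N ⊔ M' := by rw [hM', sup_comm U N, sup_assoc]
      rw [e]
      rcases hweak.1.2.2.2 (N ⊔ M') inferInstance le_sup_right
        (sup_le (hNS.trans hsoc) hM'I) with h | h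
      · exact absurd (h ▸ le_sup_left) hNM'
      · exact h
    · rw [eq_bot_iff]
      rintro x ⟨hx, hxD⟩
      obtain ⟨u, hu, n, hn, rfl⟩ := Subgroup.mem_sup_of_normal_right.1 hx
      have hn' : n ∈ M' := by
        have h1 : u⁻¹ * (u * n) ∈ M' :=
          M'.mul_mem (M'.inv_mem (Subgroup.mem_sup_left hu)) (Subgroup.mem_sup_right hxD)
        simpa using h1
      have h2 : n ∈ (⊥ : Subgroup G) := hNinf ▸ (⟨hn, hn'⟩ : n ∈ N ⊓ M')
      rw [Subgroup.mem_bot] at h2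
      subst h2
      rw [mul_one] at hxD ⊢
      exact hinf ▸ (⟨hu, hxD.1⟩ : u ∈ U ⊓ D)

theorem socle_le_comap_socle (R : Subgroup G) [R.Normal] :
    socle G ≤ (socle (G ⧸ R)).comap (QuotientGroup.mk' R) := by
  refine sSup_le fun N hN => ?_
  rw [← Subgroup.map_le_iff_le_comap]
  have hNn := hN.1
  have hsurj := QuotientGroup.mk'_surjective R
  by_cases hbot : N.map (QuotientGroup.mk' R) = ⊥
  · rw [hbot]; exact bot_le
  refine le_sSup ⟨hNn.map _ hsurj, hbot, fun T hT hTne hTN => le_antisymm hTN ?_⟩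
  have hTc : (T.comap (QuotientGroup.mk' R)).Normal := hT.comap _
  rcases minimal_inf hN hTc with h | h
  · exact Subgroup.map_le_iff_le_comap.2 h
  · exfalso
    apply hTne
    rw [eq_bot_iff]
    intro t ht
    obtain ⟨n, hn, rfl⟩ := hTN ht
    have : n ∈ (⊥ : Subgroup G) := h ▸ (⟨hn, ht⟩ : n ∈ N ⊓ T.comap (QuotientGroup.mk' R))
    rw [Subgroup.mem_bot] at this
    simp [this]

theorem comap_socle_eq (R I : Subgroup G) [R.Normal] (hI : I.Normal) (hRI : R ≤ I)
    (hIs : I ≤ (socle (G ⧸ R)).comap (QuotientGroup.mk' R))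
    (hcent : ∀ t : G, (∀ x ∈ I, t * x * t⁻¹ * x⁻¹ ∈ R) → t ∈ I) :
    (socle (G ⧸ R)).comap (QuotientGroup.mk' R) = I := by
  refine le_antisymm ?_ hIs
  have hsurj := QuotientGroup.mk'_surjective R
  have h1 : socle (G ⧸ R) ≤ I.map (QuotientGroup.mk' R) := by
    refine sSup_le fun T hT => ?_
    have hIm : (I.map (QuotientGroup.mk' R)).Normal := hI.map _ hsurj
    rcases minimal_inf hT hIm with h | h
    · exact h
    · intro t ht
      obtain ⟨t, rfl⟩ := hsurj t
      refine ⟨t, hcent t fun x hx => ?_, rfl⟩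
      have := commute_of_inf hT.1 hIm h ht (Subgroup.mem_map_of_mem _ hx)
      rw [← QuotientGroup.eq_one_iff]
      change QuotientGroup.mk' R _ = 1
      rw [map_mul, map_mul, map_mul, this]
      simp
  intro x hx
  obtain ⟨y, hy, hxy⟩ := h1 hx
  have : y⁻¹ * x ∈ R := QuotientGroup.eq.1 hxy
  simpa using I.mul_mem hy (hRI this)

theorem GEquiv.twisted {V₁ V₂ : Type*} [Group V₁] [Group V₂]
    {a₁ : G →* MulAut V₁} {a₂ : G →* MulAut V₂} (h : GEquiv G a₁ a₂) :
    ∃ (φ : V₁ ≃* V₂) (β : G → V₂), ∀ g v, φ (a₁ g v) = β g * a₂ g (φ v) * (β g)⁻¹ := by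
  obtain ⟨φ, Φ, h1, h2⟩ := h
  refine ⟨φ, fun g => (Φ (SemidirectProduct.inr g)).left, fun g v => ?_⟩
  have e : (SemidirectProduct.inl (a₁ g v) : V₁ ⋊[a₁] G) * SemidirectProduct.inr g =
      SemidirectProduct.inr g * SemidirectProduct.inl v := by
    ext <;> simp
  have := congrArg (fun x => (Φ x).left) e
  simp only [map_mul, h1, SemidirectProduct.mul_left, SemidirectProduct.left_inl,
    SemidirectProduct.right_inl, map_one, MulAut.one_apply, h2,
    SemidirectProduct.right_inr] at this
  rw [← this]; group

theorem GEquiv.of_iso {V₁ V₂ : Type*} [Group V₁] [Group V₂]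
    {a₁ : G →* MulAut V₁} {a₂ : G →* MulAut V₂} (e : V₁ ≃* V₂)
    (he : ∀ g v, e (a₁ g v) = a₂ g (e v)) : GEquiv G a₁ a₂ :=
  ⟨e, SemidirectProduct.congr e (MulEquiv.refl G) (fun g => by ext v; simpa using he g v),
    fun v => by ext <;> simp, fun x => by simp⟩

theorem mem_sup_centralizer_of_inner {N : Subgroup G} [N.Normal] {x n : G} (hn : n ∈ N)
    (h : ∀ w ∈ N, x * w * x⁻¹ = n * w * n⁻¹) :
    x ∈ N ⊔ Subgroup.centralizer (N : Set G) := by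
  have : n⁻¹ * x ∈ Subgroup.centralizer (N : Set G) := by
    rw [Subgroup.mem_centralizer_iff]
    intro w hw
    have := h w hw
    calc w * (n⁻¹ * x) = n⁻¹ * (n * w * n⁻¹) * x := by group
      _ = n⁻¹ * x * w := by rw [← this]; group
  simpa using Subgroup.mul_mem_sup hn this

theorem ker_conjNormal (N : Subgroup G) [N.Normal] :
    (MulAut.conjNormal : G →* MulAut N).ker = Subgroup.centralizer (N : Set G) := by
  ext g
  rw [MonoidHom.mem_ker, Subgroup.mem_centralizer_iff]
  constructor
  · intro h w hw
    have := congrArg (fun e : MulAut N => ((e ⟨w, hw⟩ : N) : G)) h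
    simp only [MulAut.conjNormal_apply, MulAut.one_apply] at this
    nth_rewrite 1 [← this]; group
  · intro h
    ext w
    have := h w w.2
    simp only [MulAut.conjNormal_apply, MulAut.one_apply]
    rw [← this]; group

theorem gequiv_of_complement {N M : Subgroup G} (hN : IsMinimalNormal G N) [N.Normal]
    [M.Normal] (hinf : N ⊓ M = ⊥) (hsup : N ⊔ M = N ⊔ Subgroup.centralizer (N : Set G)) :
    GEquiv G (socAct G (QuotientGroup.mk' M)) (MulAut.conjNormal : G →* MulAut N) := by
  have hle : N ⊔ M ≤ (socle (G ⧸ M)).comap (QuotientGroup.mk' M) := by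
    refine sup_le ((le_sSup hN : N ≤ socle G).trans (socle_le_comap_socle M)) fun x hx => ?_
    have : QuotientGroup.mk' M x = 1 := (QuotientGroup.eq_one_iff x).2 hx
    rw [Subgroup.mem_comap, this]
    exact Subgroup.one_mem _
  have hsoc := comap_socle_eq M (N ⊔ M) inferInstance le_sup_right hle (by
    intro t ht
    rw [hsup]
    refine Subgroup.mem_sup_right (Subgroup.mem_centralizer_iff.2 fun n hn => ?_)
    have h1 := ht n (Subgroup.mem_sup_left hn)
    have h2 : t * n * t⁻¹ * n⁻¹ ∈ N :=
      N.mul_mem (Subgroup.Normal.conj_mem inferInstance n hn t) (N.inv_mem hn)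
    have h3 : t * n * t⁻¹ * n⁻¹ ∈ (⊥ : Subgroup G) := hinf ▸ ⟨h2, h1⟩
    rw [Subgroup.mem_bot, mul_inv_eq_one, mul_inv_eq_iff_eq_mul] at h3
    exact h3.symm)
  let f : N →* socle (G ⧸ M) :=
    { toFun := fun n => ⟨QuotientGroup.mk' M n, hle (Subgroup.mem_sup_left n.2)⟩
      map_one' := by ext; simp
      map_mul' := fun x y => by ext; simp }
  have hf : Function.Bijective f := by
    constructor
    · rw [injective_iff_map_eq_one]
      intro n hn
      have h1 : QuotientGroup.mk' M (n : G) = 1 := congrArg Subtype.val hn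
      have h2 : (n : G) ∈ M := (QuotientGroup.eq_one_iff _).1 h1
      have h3 : (n : G) ∈ (⊥ : Subgroup G) := hinf ▸ ⟨n.2, h2⟩
      exact Subtype.ext (Subgroup.mem_bot.1 h3)
    · rintro ⟨y, hy⟩
      obtain ⟨x, rfl⟩ := QuotientGroup.mk'_surjective M y
      have hx : x ∈ N ⊔ M := hsoc ▸ hy
      obtain ⟨n, hn, m, hm, rfl⟩ := Subgroup.mem_sup_of_normal_right.1 hx
      refine ⟨⟨n, hn⟩, Subtype.ext ?_⟩
      have : QuotientGroup.mk' M m = 1 := (QuotientGroup.eq_one_iff m).2 hm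
      change QuotientGroup.mk' M n = QuotientGroup.mk' M (n * m)
      rw [map_mul, this, mul_one]
  let e := MulEquiv.ofBijective f hf
  refine GEquiv.of_iso e.symm fun g v => ?_
  obtain ⟨n, rfl⟩ := e.surjective v
  rw [MulEquiv.symm_apply_eq, MulEquiv.symm_apply_apply]
  ext
  change ((MulAut.conjNormal (QuotientGroup.mk' M g) (e n) : socle (G ⧸ M)) : G ⧸ M) =
    QuotientGroup.mk' M ((MulAut.conjNormal g n : N) : G)
  rw [MulAut.conjNormal_apply, MulAut.conjNormal_apply]
  change QuotientGroup.mk' M g * QuotientGroup.mk' M n * (QuotientGroup.mk' M g)⁻¹ = _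
  simp

theorem weak_of_crownNormals [Finite G] {N M : Subgroup G} (hN : IsMinimalNormal G N)
    [N.Normal] (hM : M ∈ crownNormals (MulAut.conjNormal : G →* MulAut N)) :
    WeakCrown (N ⊔ Subgroup.centralizer (N : Set G)) M := by
  obtain ⟨hMn, hab, hnab, hge⟩ := hM
  obtain ⟨φ, β, hφ⟩ := hge.twisted
  set C := Subgroup.centralizer (N : Set G) with hC
  set A := (socle (G ⧸ M)).comap (QuotientGroup.mk' M) with hA
  have hker := ker_conjNormal N
  have hsurj := QuotientGroup.mk'_surjective M
  -- the inner action criterion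
  have hinner : ∀ (x : G) (b : N), (∀ v, φ (socAct G (QuotientGroup.mk' M) x v) =
      b * φ v * b⁻¹) → x ∈ N ⊔ C := by
    intro x b hb
    refine mem_sup_centralizer_of_inner (n := ((β x)⁻¹ * b : N)) (SetLike.coe_mem _) ?_
    intro w hw
    have h1 := hφ x (φ.symm ⟨w, hw⟩)
    rw [hb, MulEquiv.apply_symm_apply] at h1
    have h2 : (MulAut.conjNormal x : MulAut N) ⟨w, hw⟩ =
        ((β x)⁻¹ * b) * ⟨w, hw⟩ * ((β x)⁻¹ * b)⁻¹ := by
      calc (MulAut.conjNormal x : MulAut N) ⟨w, hw⟩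
          = (β x)⁻¹ * (β x * (MulAut.conjNormal x : MulAut N) ⟨w, hw⟩ * (β x)⁻¹) * β x := by group
        _ = _ := by rw [← h1]; group
    have h3 := congrArg (Subtype.val : N → G) h2
    rw [MulAut.conjNormal_apply] at h3
    simpa using h3
  have hAI : A ≤ N ⊔ C := by
    intro x hx
    refine hinner x (φ ⟨QuotientGroup.mk' M x, hx⟩) fun v => ?_
    rw [← map_mul, ← map_inv, ← map_mul]
    congr 1
  have hMA : M ≤ A := by
    intro x hx
    have : QuotientGroup.mk' M x = 1 := (QuotientGroup.eq_one_iff x).2 hx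
    rw [hA, Subgroup.mem_comap, this]
    exact Subgroup.one_mem _
  have hAidx : Nat.card N * A.index = M.index := by
    rw [hA, Subgroup.index_comap_of_surjective _ hsurj, ← Nat.card_congr φ.toEquiv,
      Subgroup.card_mul_index]
    rfl
  have hIidx : Nat.card N * (N ⊔ C).index = M.index := by
    by_cases hcomm : ∀ x y : N, x * y = y * x
    · obtain ⟨e⟩ := hab hcomm
      have h1 : M.index = Nat.card N * C.index := by
        rw [Subgroup.index_eq_card, Nat.card_congr e.toEquiv, SemidirectProduct.card,
          hC, ← hker]
        rfl
      have h2 : N ≤ C := fun x hx => Subgroup.mem_centralizer_iff.2 fun y hy =>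
        congrArg Subtype.val (hcomm ⟨y, hy⟩ ⟨x, hx⟩)
      rw [h1, sup_eq_right.2 h2]
    · obtain ⟨e⟩ := hnab hcomm
      have h1 : M.index = C.index := by
        rw [Subgroup.index_eq_card, Nat.card_congr e.toEquiv, hC, ← hker]
        rfl
      have h2 : N ⊓ C = ⊥ := by
        refine (minimal_inf hN inferInstance).resolve_left fun h => hcomm fun x y => ?_
        exact Subtype.ext (Subgroup.mem_centralizer_iff.1 (h y.2) x x.2)
      rw [h1, ← Subgroup.relIndex_mul_index (le_sup_right : C ≤ N ⊔ C),
        Subgroup.relIndex_sup_right, ← Subgroup.inf_relIndex_right, inf_comm, h2,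
        Subgroup.relIndex_bot_left]
  have hNpos : 0 < Nat.card N := Nat.card_pos
  have hAI' : A = N ⊔ C := by
    refine le_antisymm hAI ?_
    rw [← Subgroup.relIndex_eq_one]
    have h1 : A.index = (N ⊔ C).index :=
      Nat.eq_of_mul_eq_mul_left hNpos (hAidx.trans hIidx.symm)
    have h2 := Subgroup.relIndex_mul_index hAI
    rw [h1] at h2
    exact Nat.eq_of_mul_eq_mul_right
      (Nat.pos_of_ne_zero (Subgroup.index_ne_zero_of_finite (H := N ⊔ C))) (by rw [h2, one_mul])
  rw [← hAI'] at hinner ⊢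
  have hAn : A.Normal := (socle_normal (G ⧸ M)).comap _
  refine ⟨⟨hAn, hMn, lt_of_le_of_ne hMA fun h => ?_, ?_⟩, ?_⟩
  · rw [← h] at hAidx
    have hp : 0 < M.index := Nat.pos_of_ne_zero Subgroup.index_ne_zero_of_finite
    have : Nat.card N = 1 := Nat.eq_of_mul_eq_mul_right hp (by rw [hAidx, one_mul])
    exact hN.2.1 (Subgroup.card_eq_one.1 this)
  · intro T hT hMT hTA
    -- transport `T/M` to a normal subgroup of `G` inside `N`
    let T' : Subgroup (G ⧸ M) := T.map (QuotientGroup.mk' M)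
    have hT' : T'.Normal := hT.map _ hsurj
    let W : Subgroup G :=
      ((T'.subgroupOf (socle (G ⧸ M))).map φ.toMonoidHom).map N.subtype
    have hWN : W ≤ N := by
      rintro _ ⟨w, -, rfl⟩; exact w.2
    have hW : W.Normal := by
      constructor
      rintro _ ⟨_, ⟨v, hv, rfl⟩, rfl⟩ g
      obtain ⟨b, hb⟩ := φ.surjective (β g)
      have hg := hφ g v
      refine ⟨φ (b⁻¹ * socAct G (QuotientGroup.mk' M) g v * b), ⟨_, ?_, rfl⟩, ?_⟩
      · have hv' : (v : G ⧸ M) ∈ T' := hv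
        change ((b⁻¹ * socAct G (QuotientGroup.mk' M) g v * b : socle (G ⧸ M)) : G ⧸ M) ∈ T'
        have h1 : ((socAct G (QuotientGroup.mk' M) g v : socle (G ⧸ M)) : G ⧸ M) ∈ T' := by
          change ((MulAut.conjNormal (QuotientGroup.mk' M g) v : socle (G ⧸ M)) : G ⧸ M) ∈ T'
          rw [MulAut.conjNormal_apply]
          exact hT'.conj_mem _ hv' _
        simpa using hT'.conj_mem _ h1 (b⁻¹ : socle (G ⧸ M))
      · have h2 : φ (b⁻¹ * socAct G (QuotientGroup.mk' M) g v * b) =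
            (MulAut.conjNormal g : MulAut N) (φ v) := by
          rw [map_mul, map_mul, map_inv, hb, hg]; group
        rw [h2]
        change ((MulAut.conjNormal g (φ v) : N) : G) = _
        rw [MulAut.conjNormal_apply]
        rfl
    by_cases hWb : W = ⊥
    · left
      refine le_antisymm (fun t ht => ?_) hMT
      have htA : QuotientGroup.mk' M t ∈ socle (G ⧸ M) := hTA ht
      have : ((φ ⟨_, htA⟩ : N) : G) ∈ W :=
        ⟨_, ⟨⟨_, htA⟩, (⟨t, ht, rfl⟩ : QuotientGroup.mk' M t ∈ T'), rfl⟩, rfl⟩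
      rw [hWb, Subgroup.mem_bot] at this
      have h1 : φ ⟨_, htA⟩ = 1 := Subtype.ext this
      rw [map_eq_one_iff φ φ.injective] at h1
      exact (QuotientGroup.eq_one_iff t).1 (congrArg Subtype.val h1)
    · right
      have hWeq := hN.2.2 W hW hWb hWN
      refine le_antisymm hTA fun x hx => ?_
      have hx' : QuotientGroup.mk' M x ∈ socle (G ⧸ M) := hx
      have : ((φ ⟨_, hx'⟩ : N) : G) ∈ W := by rw [hWeq]; exact SetLike.coe_mem _
      obtain ⟨w, ⟨v, hv, hvw⟩, hw⟩ := this
      have h1 : w = φ ⟨_, hx'⟩ := Subtype.ext hw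
      have h2 : v = ⟨_, hx'⟩ := φ.injective (hvw.trans h1)
      subst h2
      obtain ⟨t, ht, htx⟩ := (hv : QuotientGroup.mk' M x ∈ T')
      have : t⁻¹ * x ∈ M := QuotientGroup.eq.1 htx
      simpa using T.mul_mem ht (hMT this)
  · intro t ht
    refine hinner t 1 fun v => ?_
    rw [one_mul, inv_one, mul_one]
    congr 1
    ext
    change ((MulAut.conjNormal (QuotientGroup.mk' M t) v : socle (G ⧸ M)) : G ⧸ M) = _
    rw [MulAut.conjNormal_apply]
    obtain ⟨y, hy⟩ := v
    obtain ⟨x, rfl⟩ := hsurj y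
    have h1 : QuotientGroup.mk' M (t * x * t⁻¹ * x⁻¹) = 1 :=
      (QuotientGroup.eq_one_iff _).2 (ht x hy)
    rw [map_mul, map_mul, map_mul, map_inv, map_inv, mul_inv_eq_one] at h1
    exact h1

theorem exists_mem_crownNormals [Finite G] (hfrat : frattini G = ⊥) {N : Subgroup G}
    (hN : IsMinimalNormal G N) [N.Normal] :
    ∃ M ∈ crownNormals (MulAut.conjNormal : G →* MulAut N), N ⊓ M = ⊥ := by
  have hker := ker_conjNormal N
  by_cases hcomm : ∀ x y : N, x * y = y * x
  · obtain ⟨H, hH1, hH2⟩ := exists_abelian_complement hfrat N inferInstance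
      (fun x hx y hy => congrArg Subtype.val (hcomm ⟨x, hx⟩ ⟨y, hy⟩))
    have hex : ∀ g : G, ∃ n : N, (n : G)⁻¹ * g ∈ H := by
      intro g
      have : g ∈ N ⊔ H := by rw [sup_comm, hH1]; trivial
      obtain ⟨n, hn, h, hh, rfl⟩ := Subgroup.mem_sup_of_normal_left.1 this
      exact ⟨⟨n, hn⟩, by simpa using hh⟩
    choose p hp using hex
    have huniq : ∀ (g : G) (n : N), (n : G)⁻¹ * g ∈ H → p g = n := by
      intro g n hn
      have h1 : (n : G)⁻¹ * p g ∈ H := by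
        have := H.mul_mem hn (H.inv_mem (hp g))
        simpa [mul_assoc] using this
      have h2 : (n : G)⁻¹ * p g ∈ (⊥ : Subgroup G) :=
        hH2 ▸ ⟨h1, N.mul_mem (N.inv_mem n.2) (p g).2⟩
      rw [Subgroup.mem_bot, inv_mul_eq_one] at h2
      exact Subtype.ext h2.symm
    let a : G →* MulAut N := MulAut.conjNormal
    let F : G →* N ⋊[QuotientGroup.kerLift a] (G ⧸ a.ker) :=
      MonoidHom.mk' (fun g => ⟨p g, (g : G ⧸ a.ker)⟩) (by
        intro x y
        ext1
        · change p (x * y) = p x * QuotientGroup.kerLift a (x : G ⧸ a.ker) (p y)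
          rw [QuotientGroup.kerLift_mk]
          apply huniq
          -- write `x = p x * h`; `p x` centralizes `N`
          have h1 : (a x (p y) : N) = a ((p x : G)⁻¹ * x) (p y) := by
            rw [map_mul, MulAut.mul_apply]
            apply Subtype.ext
            generalize a x (p y) = z at *
            change (z : G) = ((MulAut.conjNormal ((p x : G)⁻¹) z : N) : G)
            rw [MulAut.conjNormal_apply]
            have := congrArg (Subtype.val : N → G) (hcomm (p x)⁻¹ z)
            simp only [Subgroup.coe_mul, Subgroup.coe_inv] at this
            rw [this]; group
          rw [h1]
          have h2 : ((p x * a ((p x : G)⁻¹ * x) (p y) : N) : G)⁻¹ * (x * y) =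
              ((p x : G)⁻¹ * x) * ((p y : G)⁻¹ * y) := by
            rw [Subgroup.coe_mul]
            change ((p x : G) * ((MulAut.conjNormal ((p x : G)⁻¹ * x) (p y) : N) : G))⁻¹ * _ = _
            rw [MulAut.conjNormal_apply]
            group
          rw [h2]
          exact H.mul_mem (hp x) (hp y)
        · rfl)
    have hF1 : ∀ g, (F g).left = p g := fun g => rfl
    have hF2 : ∀ g, (F g).right = (g : G ⧸ a.ker) := fun g => rfl
    have hNC : N ≤ Subgroup.centralizer (N : Set G) := fun x hx =>
      Subgroup.mem_centralizer_iff.2 fun y hy =>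
        congrArg Subtype.val (hcomm ⟨y, hy⟩ ⟨x, hx⟩)
    have hFs : Function.Surjective F := by
      rintro ⟨n, q⟩
      obtain ⟨g, rfl⟩ := QuotientGroup.mk_surjective q
      refine ⟨n * ((p g : G)⁻¹ * g), ?_⟩
      ext1
      · rw [hF1]
        apply huniq
        simpa using hp g
      · rw [hF2]
        apply QuotientGroup.eq.2
        change _ ∈ a.ker
        rw [show a.ker = _ from hker]
        have h1 : (n : G) * (p g : G)⁻¹ ∈ Subgroup.centralizer (N : Set G) :=
          hNC (N.mul_mem n.2 (N.inv_mem (p g).2))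
        have h2 := (inferInstance : (Subgroup.centralizer (N : Set G)).Normal).conj_mem _
          (Subgroup.inv_mem _ h1) g⁻¹
        have e : ((n : G) * ((p g : G)⁻¹ * g))⁻¹ * g =
          g⁻¹ * ((n : G) * (p g : G)⁻¹)⁻¹ * g⁻¹⁻¹ := by group
        rw [e]; exact h2
    have hkerF : ∀ g, g ∈ F.ker ↔ g ∈ H ∧ g ∈ Subgroup.centralizer (N : Set G) := by
      intro g
      rw [MonoidHom.mem_ker, ← hker, SemidirectProduct.ext_iff, hF1, hF2]
      refine and_congr ⟨fun h => ?_, fun h => ?_⟩ (QuotientGroup.eq_one_iff g)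
      · have := hp g
        rw [h] at this
        simpa using this
      · apply huniq
        simpa using h
    have hinf : N ⊓ F.ker = ⊥ := by
      rw [eq_bot_iff, ← hH2]
      rintro x ⟨hx, hx'⟩
      exact ⟨((hkerF x).1 hx').1, hx⟩
    refine ⟨F.ker, ⟨inferInstance, fun _ => ⟨?_⟩, fun h => absurd hcomm h, ?_⟩, hinf⟩
    · exact QuotientGroup.quotientKerEquivOfSurjective F hFs
    · refine gequiv_of_complement hN hinf (le_antisymm ?_ ?_)
      · exact sup_le_sup_left (fun x hx => ((hkerF x).1 hx).2) _
      · refine sup_le le_sup_left fun c hc => ?_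
        have : (p c : G) * ((p c : G)⁻¹ * c) ∈ N ⊔ F.ker :=
          Subgroup.mul_mem_sup (p c).2 ((hkerF _).2
            ⟨hp c, Subgroup.mul_mem _ (Subgroup.inv_mem _ (hNC (p c).2)) hc⟩)
        simpa using this
  · have hinf : N ⊓ Subgroup.centralizer (N : Set G) = ⊥ := by
      refine (minimal_inf hN inferInstance).resolve_left fun h => hcomm fun x y => ?_
      exact Subtype.ext (Subgroup.mem_centralizer_iff.1 (h y.2) x x.2)
    exact ⟨Subgroup.centralizer (N : Set G), ⟨inferInstance, fun h => absurd h hcomm,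
      fun _ => ⟨QuotientGroup.quotientMulEquivOfEq hker.symm⟩,
      gequiv_of_complement hN hinf rfl⟩, hinf⟩

/-- **Lemma 2.1** ([classes, Lemma 1.3.6]): a nontrivial finite group `G` with trivial
Frattini subgroup has a chief factor `V` and a nontrivial normal subgroup `U` with
`I_G(V) = R_G(V) × U`. -/
theorem exists_crown_complement (G : Type) [Group G] [Finite G] [Nontrivial G]
    (hfrat : frattini G = ⊥) :
    ∃ (V : Type) (_ : Group V) (a : G →* MulAut V) (X Y : Subgroup G),
      IsChiefFactorPair G X Y ∧ RepresentsFactor G a X Y ∧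
      ∃ U : Subgroup G, U.Normal ∧ U ≠ ⊥ ∧
        crownSocle a = crownRadical a ⊔ U ∧ crownRadical a ⊓ U = ⊥ := by
  classical
  -- choose a minimal normal subgroup `N` with `N * C_G(N)` minimal
  obtain ⟨N₀, hN₀, -⟩ := exists_minimalNormal_le (⊤ : Subgroup G) inferInstance top_ne_bot
  obtain ⟨N, hN, hmin⟩ := (Set.toFinite {N : Subgroup G | IsMinimalNormal G N}).exists_minimalFor
    (fun N : Subgroup G => N ⊔ Subgroup.centralizer (N : Set G)) _ ⟨N₀, hN₀⟩
  have hN : IsMinimalNormal G N := hN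
  have hNn : N.Normal := hN.1
  let a : G →* MulAut N := MulAut.conjNormal
  set I := N ⊔ Subgroup.centralizer (N : Set G) with hI
  have hkey : ∀ M, WeakCrown I M → ¬ socle G ≤ M := by
    intro M hM hS
    obtain ⟨N', hN', hlt⟩ := weak_exists_smaller hfrat hM hS
    exact absurd (hmin hN' hlt.le) (not_le_of_gt hlt)
  have hsoc : socle G ≤ I := by
    refine sSup_le fun K hK => ?_
    have hK : IsMinimalNormal G K := hK
    rcases minimal_inf hK hNn with h | h
    · exact h.trans le_sup_left
    · exact (le_centralizer_of_inf hK.1 hNn h).trans le_sup_right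
  obtain ⟨M₀, hM₀, hinf₀⟩ := exists_mem_crownNormals hfrat hN
  have hfin : (crownNormals a).Finite := Set.toFinite _
  obtain ⟨U, hUn, hUS, hsup, hinf⟩ := exists_complement_finset I inferInstance hsoc hkey
    hfin.toFinset (fun M hM => weak_of_crownNormals hN (hfin.mem_toFinset.1 hM))
  have hRM₀ : crownRadical a ≤ M₀ := sInf_le hM₀
  have hwM₀ : WeakCrown I M₀ := weak_of_crownNormals hN hM₀
  have hRI : crownRadical a ≤ I := hRM₀.trans hwM₀.1.2.2.1.le
  have hR : I ⊓ hfin.toFinset.inf id = crownRadical a := by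
    have : hfin.toFinset.inf id = crownRadical a := by
      rw [Finset.inf_id_eq_sInf, hfin.coe_toFinset]; rfl
    rw [this, inf_eq_right.2 hRI]
  rw [hR] at hsup hinf
  refine ⟨N, inferInstance, a, N, ⊥, ⟨hNn, inferInstance, bot_lt_iff_ne_bot.2 hN.2.1, ?_⟩,
    ⟨MonoidHom.id N, fun x => ⟨x, rfl⟩, ?_, ?_⟩, U, hUn, ?_, ?_, ?_⟩
  · intro K hK _ hKN
    by_cases h : K = ⊥
    · exact Or.inl h
    · exact Or.inr (hN.2.2 K hK h hKN)
  · intro x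
    simp
  · intro g x y hxy
    apply Subtype.ext
    change (y : G) = ((MulAut.conjNormal g x : N) : G)
    rw [MulAut.conjNormal_apply, hxy]
  · rintro rfl
    rw [bot_sup_eq] at hsup
    rw [hsup] at hRM₀
    exact absurd hRM₀ (not_le_of_gt hwM₀.1.2.2.1)
  · rw [sup_comm, hsup]
    refine comap_socle_eq (crownRadical a) I inferInstance hRI ?_ ?_
    · rw [← hsup]
      refine sup_le (hUS.trans (socle_le_comap_socle _)) fun x hx => ?_
      have : QuotientGroup.mk' (crownRadical a) x = 1 := (QuotientGroup.eq_one_iff x).2 hx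
      rw [Subgroup.mem_comap, this]
      exact Subgroup.one_mem _
    · intro t ht
      refine Subgroup.mem_sup_right (Subgroup.mem_centralizer_iff.2 fun n hn => ?_)
      have h1 := hRM₀ (ht n (Subgroup.mem_sup_left hn))
      have h2 : t * n * t⁻¹ * n⁻¹ ∈ N := N.mul_mem (hNn.conj_mem n hn t) (N.inv_mem hn)
      have h3 : t * n * t⁻¹ * n⁻¹ ∈ (⊥ : Subgroup G) := hinf₀ ▸ ⟨h2, h1⟩
      rw [Subgroup.mem_bot, mul_inv_eq_one, mul_inv_eq_iff_eq_mul] at h3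
      exact h3.symm
  · rw [inf_comm, hinf]

end ChebotarevPaper
end

section
/- Let G be a finite group with trivial Frattini subgroup, and let V be a chief factor of G and U a nontrivial normal subgroup of G with I_G(V) = R_G(V) × U. If K is a subgroup of G with KU = G and KR_G(V) = G, then K = G. -/
/-!
Definitions supporting the formalization of
"An upper bound on the Chebotarev invariant of a finite group" (Lucchini–Tracey).
-/

open scoped BigOperators

namespace ChebotarevPaper

variable (G : Type*) [Group G]

variable {G}

/-- A surjective homomorphism maps the socle into the socle. -/
theorem socle_map_mem {L₁ L₂ : Type} [Group L₁] [Group L₂] (q : L₁ →* L₂)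
    (hq : Function.Surjective q) {x : L₁} (hx : x ∈ socle L₁) : q x ∈ socle L₂ := by
  suffices h : socle L₁ ≤ (socle L₂).comap q from h hx
  rw [socle]
  apply sSup_le
  intro A hA y hy
  obtain ⟨hAn, hAne, hAmin⟩ := hA
  rw [Subgroup.mem_comap]
  by_cases hbot : A.map q = ⊥
  · have : q y ∈ A.map q := Subgroup.mem_map_of_mem q hy
    rw [hbot, Subgroup.mem_bot] at this
    rw [this]
    exact one_mem _
  · have hmin : IsMinimalNormal L₂ (A.map q) := by
      refine ⟨hAn.map q hq, hbot, ?_⟩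
      intro B hBn hBne hBle
      apply le_antisymm hBle
      have h1 : (B.comap q ⊓ A) = A := by
        apply hAmin _ _ _ inf_le_right
        · have : (B.comap q).Normal := hBn.comap q
          exact Subgroup.normal_inf_normal _ _
        · intro hb
          apply hBne
          rw [Subgroup.eq_bot_iff_forall]
          intro b hbB
          obtain ⟨z, hzA, rfl⟩ := hBle hbB
          have : z ∈ B.comap q ⊓ A := ⟨hbB, hzA⟩
          rw [hb, Subgroup.mem_bot] at this
          rw [this, map_one]
      rw [Subgroup.map_le_iff_le_comap, ← h1]
      exact inf_le_left
    exact le_sSup (a := A.map q) hmin (Subgroup.mem_map_of_mem q hy)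

/-- An isomorphism of groups restricts to an isomorphism of socles. -/
def socleEquiv {L₁ L₂ : Type} [Group L₁] [Group L₂] (e : L₁ ≃* L₂) :
    socle L₁ ≃* socle L₂ where
  toFun x := ⟨e x, socle_map_mem e.toMonoidHom e.surjective x.2⟩
  invFun x := ⟨e.symm x, socle_map_mem e.symm.toMonoidHom e.symm.surjective x.2⟩
  left_inv x := by ext; simp
  right_inv x := by ext; simp
  map_mul' x y := by ext; simp

/-- Homomorphisms to a group `L` agreeing modulo the socle of `L` (up to an isomorphism of the
target) give equivalent actions on the socle. -/
theorem gEquiv_socAct {H Q L : Type} [Group H] [Group Q] [Group L] (e : Q ≃* L)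
    (p : H →* Q) (π : H →* L) (h : ∀ g, e (p g) * (π g)⁻¹ ∈ socle L) :
    GEquiv H (socAct H p) (socAct H π) := by
  have h' : ∀ g, e.symm (π g * (e (p g))⁻¹) ∈ socle Q := by
    intro g
    apply socle_map_mem e.symm.toMonoidHom e.symm.surjective
    have := inv_mem (h g)
    simpa using this
  refine ⟨socleEquiv e,
    { toFun := fun x => ⟨socleEquiv e x.left * ⟨_, h x.right⟩, x.right⟩
      invFun := fun x => ⟨(socleEquiv e).symm x.left * ⟨_, h' x.right⟩, x.right⟩
      left_inv := ?_
      right_inv := ?_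
      map_mul' := ?_ }, ?_, ?_⟩
  · intro x
    ext
    · simp [socleEquiv]
      group
    · simp
  · intro x
    ext
    · simp [socleEquiv]
      group
    · simp
  · intro x y
    ext
    · change e (x.left * (p x.right * y.left * (p x.right)⁻¹)) *
          (e (p (x.right * y.right)) * (π (x.right * y.right))⁻¹) =
        e x.left * (e (p x.right) * (π x.right)⁻¹) *
          (π x.right * (e y.left * (e (p y.right) * (π y.right)⁻¹)) * (π x.right)⁻¹)
      simp only [map_mul, map_inv]
      group
    · rfl
  · intro v
    ext
    · simp [socleEquiv]
    · simp
  · intro x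
    rfl

theorem gEquiv_trans {H V₁ V₂ V₃ : Type} [Group H] [Group V₁] [Group V₂] [Group V₃]
    {a₁ : H →* MulAut V₁} {a₂ : H →* MulAut V₂} {a₃ : H →* MulAut V₃}
    (h : GEquiv H a₁ a₂) (h' : GEquiv H a₂ a₃) : GEquiv H a₁ a₃ := by
  obtain ⟨φ, Φ, h1, h2⟩ := h
  obtain ⟨φ', Φ', h1', h2'⟩ := h'
  refine ⟨φ.trans φ', Φ.trans Φ', ?_, ?_⟩
  · intro v
    simp [h1, h1']
  · intro x
    simp [h2, h2']

/-- An action representing a chief factor is irreducible. -/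
theorem irreducible_of_represents {H V : Type} [Group H] [Group V] {a : H →* MulAut V}
    {X Y : Subgroup H} (hchief : IsChiefFactorPair H X Y) (hrep : RepresentsFactor H a X Y)
    (W : Subgroup V) (hW : ∀ (g : H) (v : V), v ∈ W → a g v ∈ W) : W = ⊥ ∨ W = ⊤ := by
  obtain ⟨hX, hY, hYX, hmin⟩ := hchief
  obtain ⟨f, hf, hker, heq⟩ := hrep
  have hn : ((W.comap f).map X.subtype).Normal := by
    constructor
    rintro _ ⟨x, hx, rfl⟩ g
    refine ⟨⟨g * x * g⁻¹, hX.conj_mem x x.2 g⟩, ?_, rfl⟩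
    have := heq g x ⟨g * x * g⁻¹, hX.conj_mem x x.2 g⟩ rfl
    simp only [SetLike.mem_coe, Subgroup.mem_comap] at hx ⊢
    rw [this]
    exact hW g _ hx
  have hl : Y ≤ (W.comap f).map X.subtype := by
    intro y hy
    refine ⟨⟨y, hYX.le hy⟩, ?_, rfl⟩
    simp only [SetLike.mem_coe, Subgroup.mem_comap]
    rw [(hker ⟨y, hYX.le hy⟩).2 hy]
    exact one_mem _
  have hr : (W.comap f).map X.subtype ≤ X := by
    rintro _ ⟨x, hx, rfl⟩
    exact x.2
  rcases hmin _ hn hl hr with h | h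
  · left
    rw [Subgroup.eq_bot_iff_forall]
    intro v hv
    obtain ⟨x, rfl⟩ := hf v
    rw [hker, ← h]
    exact ⟨x, hv, rfl⟩
  · right
    rw [Subgroup.eq_top_iff']
    intro v
    obtain ⟨x, rfl⟩ := hf v
    have hx : (x : H) ∈ (W.comap f).map X.subtype := by rw [h]; exact x.2
    obtain ⟨y, hy, hyx⟩ := hx
    have : y = x := Subtype.ext hyx
    rw [← this]
    exact hy

/-- If the action on the socle of `L` through `π` is equivalent to an irreducible one, the socle
contains no nontrivial proper normal subgroup of `L`. -/
theorem socle_irreducible {H V L : Type} [Group H] [Group V] [Group L] {a : H →* MulAut V}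
    {π : H →* L} (hE : GEquiv H (socAct H π) a)
    (hirr : ∀ W : Subgroup V, (∀ (g : H) (v : V), v ∈ W → a g v ∈ W) → W = ⊥ ∨ W = ⊤)
    (B : Subgroup L) (hB : B.Normal) (hBle : B ≤ socle L) : B = ⊥ ∨ B = socle L := by
  obtain ⟨φ, Φ, h1, h2⟩ := hE
  have key : ∀ (g : H) (v : V),
      v ∈ (B.subgroupOf (socle L)).map φ.toMonoidHom →
      a g v ∈ (B.subgroupOf (socle L)).map φ.toMonoidHom := by
    rintro g _ ⟨s, hs, rfl⟩
    set y := Φ.symm (SemidirectProduct.inr g) with hy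
    have hΦy : Φ y = SemidirectProduct.inr g := by simp [hy]
    have hc : y * SemidirectProduct.inl s * y⁻¹ = SemidirectProduct.inl
        (y.left * (socAct H π y.right s) * y.left⁻¹) := by
      ext <;> simp [mul_assoc]
    refine ⟨y.left * (socAct H π y.right s) * y.left⁻¹, ?_, ?_⟩
    · have hs' : (s : L) ∈ B := hs
      change ((y.left * (socAct H π y.right s) * y.left⁻¹ : socle L) : L) ∈ B
      simp only [Subgroup.coe_mul, Subgroup.coe_inv, socAct, MonoidHom.comp_apply,
        MulAut.conjNormal_apply]
      exact hB.conj_mem _ (hB.conj_mem _ hs' _) _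
    · have := congrArg Φ hc
      rw [map_mul, map_mul, map_inv, hΦy, h1, h1, ← map_inv, ← SemidirectProduct.inl_aut] at this
      exact (SemidirectProduct.inl_injective this).symm
  rcases hirr _ key with h | h
  · left
    rw [Subgroup.eq_bot_iff_forall]
    intro b hb
    have : φ ⟨b, hBle hb⟩ ∈ (B.subgroupOf (socle L)).map φ.toMonoidHom :=
      ⟨⟨b, hBle hb⟩, hb, rfl⟩
    rw [h, Subgroup.mem_bot] at this
    have h3 : (⟨b, hBle hb⟩ : socle L) = 1 := φ.injective (by rw [this, map_one])
    simpa using congrArg Subtype.val h3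
  · right
    apply le_antisymm hBle
    intro s hs
    have : φ ⟨s, hs⟩ ∈ (B.subgroupOf (socle L)).map φ.toMonoidHom := by rw [h]; trivial
    obtain ⟨z, hz, hzs⟩ := this
    have h3 : z = ⟨s, hs⟩ := φ.injective hzs
    rw [h3] at hz
    exact hz

/-- **Lemma 2.2** ([crowns, Proposition 11]): with `G`, `V`, `U` as in Lemma 2.1, if
`K ≤ G` satisfies `KU = G` and `K·R_G(V) = G`, then `K = G`. -/
theorem eq_top_of_sup_crown (G : Type) [Group G] [Finite G]
    (hfrat : frattini G = ⊥)
    (V : Type) [Group V] (a : G →* MulAut V) (X Y : Subgroup G)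
    (hchief : IsChiefFactorPair G X Y) (hrep : RepresentsFactor G a X Y)
    (U : Subgroup G) (hUnorm : U.Normal) (hUne : U ≠ ⊥)
    (hcrown : crownSocle a = crownRadical a ⊔ U ∧ crownRadical a ⊓ U = ⊥)
    (K : Subgroup G) (hKU : K ⊔ U = ⊤) (hKR : K ⊔ crownRadical a = ⊤) :
    K = ⊤ := by
  by_contra hK
  obtain ⟨M, hM, hKM⟩ := (eq_top_or_exists_le_coatom K).resolve_left hK
  have hMU : M ⊔ U = ⊤ := top_le_iff.1 (hKU ▸ sup_le_sup_right hKM _)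
  have hMR : M ⊔ crownRadical a = ⊤ := top_le_iff.1 (hKR ▸ sup_le_sup_right hKM _)
  have hUM : ¬ U ≤ M := fun h => hM.1 (by rw [← hMU, sup_eq_left.2 h])
  have hRM : ¬ crownRadical a ≤ M := fun h => hM.1 (by rw [← hMR, sup_eq_left.2 h])
  -- a minimal normal subgroup of `G` inside `U` among those not contained in `M`
  obtain ⟨T, ⟨hTn, hTU, hTM⟩, hTmin⟩ :=
    (Set.toFinite {T : Subgroup G | T.Normal ∧ T ≤ U ∧ ¬ T ≤ M}).exists_minimal
      ⟨U, hUnorm, le_rfl, hUM⟩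
  have hTmin' : ∀ T' : Subgroup G, T'.Normal → T' ≤ T → ¬ T' ≤ M → T ≤ T' :=
    fun T' h1 h2 h3 => hTmin ⟨h1, h2.trans hTU, h3⟩ h2
  have hTR : ¬ T ≤ crownRadical a := by
    intro h
    have : T ≤ ⊥ := hcrown.2 ▸ le_inf h hTU
    exact hTM (this.trans bot_le)
  obtain ⟨N, hN, hTN⟩ : ∃ N ∈ crownNormals a, ¬ T ≤ N := by
    by_contra hcon
    push Not at hcon
    exact hTR (le_sInf hcon)
  have hRN : crownRadical a ≤ N := sInf_le hN
  obtain ⟨hNn, hab, hnab, hE⟩ := hN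
  have hirr := irreducible_of_represents hchief hrep
  set π : G →* G ⧸ N := QuotientGroup.mk' N with hπ
  have hπs : Function.Surjective π := QuotientGroup.mk'_surjective N
  have hπ1 : ∀ g, π g = 1 ↔ g ∈ N := fun g => QuotientGroup.eq_one_iff g
  have hTNM : T ⊓ N ≤ M := by
    by_contra hcon
    have : (T ⊓ N).Normal := Subgroup.normal_inf_normal _ _
    exact hTN ((hTmin' _ this inf_le_left hcon).trans inf_le_right)
  -- `π` maps `T` into the socle
  have hTS : ∀ t ∈ T, π t ∈ socle (G ⧸ N) := by
    intro t ht
    have h1 : t ∈ crownSocle a := by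
      rw [hcrown.1]
      exact le_sup_right (a := crownRadical a) (hTU ht)
    have h2 : QuotientGroup.mk' (crownRadical a) t ∈ socle (G ⧸ crownRadical a) := h1
    have h3 := socle_map_mem (QuotientGroup.map (crownRadical a) N (MonoidHom.id G) hRN)
      (by
        intro y
        obtain ⟨g, rfl⟩ := hπs y
        exact ⟨QuotientGroup.mk' _ g, rfl⟩) h2
    exact h3
  -- `T` and the crown radical commute
  have hcomm : ∀ r ∈ crownRadical a, ∀ t ∈ T, r * t * r⁻¹ = t := by
    intro r hr t ht
    have h1 : r * t * r⁻¹ * t⁻¹ ∈ crownRadical a ⊓ U := by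
      refine Subgroup.mem_inf.2 ⟨?_, ?_⟩
      · have := (crownRadical_normal a).conj_mem _ (inv_mem hr) t
        have h2 := mul_mem hr this
        simpa [mul_assoc] using h2
      · exact hTU (mul_mem (hTn.conj_mem t ht r) (inv_mem ht))
    rw [hcrown.2, Subgroup.mem_bot] at h1
    exact mul_inv_eq_one.1 h1
  have hMTn : (M ⊓ T).Normal := by
    constructor
    intro n hn g
    have hg : g ∈ M ⊔ crownRadical a := by rw [hMR]; trivial
    obtain ⟨m, hm, r, hr, rfl⟩ := Subgroup.mem_sup_of_normal_right.1 hg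
    have h1 : m * r * n * (m * r)⁻¹ = m * n * m⁻¹ := by
      have := hcomm r hr n hn.2
      calc m * r * n * (m * r)⁻¹ = m * (r * n * r⁻¹) * m⁻¹ := by group
        _ = _ := by rw [this]
    rw [h1]
    exact Subgroup.mem_inf.2 ⟨mul_mem (mul_mem hm hn.1) (inv_mem hm), hTn.conj_mem n hn.2 m⟩
  have hMTN : M ⊓ T ≤ N := by
    rcases socle_irreducible hE hirr ((M ⊓ T).map π) (hMTn.map π hπs) (by
      rintro _ ⟨t, ht, rfl⟩
      exact hTS t ht.2) with h | h
    · intro x hx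
      have : π x ∈ (M ⊓ T).map π := Subgroup.mem_map_of_mem π hx
      rw [h, Subgroup.mem_bot] at this
      exact (hπ1 x).1 this
    · exfalso
      apply hTM
      intro t ht
      have : π t ∈ (M ⊓ T).map π := by rw [h]; exact hTS t ht
      obtain ⟨m, hm, hmt⟩ := this
      have h1 : m⁻¹ * t ∈ T ⊓ N := by
        refine Subgroup.mem_inf.2 ⟨mul_mem (inv_mem hm.2) ht, ?_⟩
        rw [← hπ1, map_mul, map_inv, hmt, inv_mul_cancel]
      have h2 := mul_mem hm.1 (hTNM h1)
      simpa using h2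
  have hMT : M ⊔ T = ⊤ := hM.2 _ (lt_of_le_of_ne le_sup_left
    (fun h => hTM (by rw [h]; exact le_sup_right)))
  -- the homomorphism `t m ↦ π m`
  obtain ⟨ψ, hψT, hψM⟩ : ∃ ψ : G →* G ⧸ N, (∀ t ∈ T, ψ t = 1) ∧ ∀ m ∈ M, ψ m = π m := by
    have hs : Function.Surjective ((QuotientGroup.mk' T).comp M.subtype) := by
      intro y
      obtain ⟨g, rfl⟩ := QuotientGroup.mk'_surjective T y
      have hg : g ∈ M ⊔ T := by rw [hMT]; trivial
      obtain ⟨m, hm, t, ht, rfl⟩ := Subgroup.mem_sup_of_normal_right.1 hg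
      refine ⟨⟨m, hm⟩, ?_⟩
      have : QuotientGroup.mk' T t = 1 := (QuotientGroup.eq_one_iff t).2 ht
      rw [map_mul, this, mul_one]
      rfl
    have hk : ((QuotientGroup.mk' T).comp M.subtype).ker ≤ (π.comp M.subtype).ker := by
      intro x hx
      have hxT : (x : G) ∈ T := (QuotientGroup.eq_one_iff (x : G)).1 hx
      exact (hπ1 (x : G)).2 (hMTN ⟨x.2, hxT⟩)
    refine ⟨(MonoidHom.liftOfSurjective _ hs ⟨_, hk⟩).comp (QuotientGroup.mk' T), ?_, ?_⟩
    · intro t ht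
      have : QuotientGroup.mk' T t = 1 := (QuotientGroup.eq_one_iff t).2 ht
      rw [MonoidHom.comp_apply, this, map_one]
    · intro m hm
      exact MonoidHom.liftOfRightInverse_comp_apply _ _
        (Function.rightInverse_surjInv hs) ⟨_, hk⟩ (⟨m, hm⟩ : M)
  have hψs : Function.Surjective ψ := by
    intro y
    obtain ⟨g, rfl⟩ := hπs y
    have hg : g ∈ M ⊔ crownRadical a := by rw [hMR]; trivial
    obtain ⟨m, hm, r, hr, rfl⟩ := Subgroup.mem_sup_of_normal_right.1 hg
    refine ⟨m, ?_⟩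
    rw [hψM m hm, map_mul, (hπ1 r).2 (hRN hr), mul_one]
  have hψπ : ∀ g, ψ g * (π g)⁻¹ ∈ socle (G ⧸ N) := by
    intro g
    have hg : g ∈ M ⊔ T := by rw [hMT]; trivial
    obtain ⟨m, hm, t, ht, rfl⟩ := Subgroup.mem_sup_of_normal_right.1 hg
    rw [map_mul, map_mul, hψT t ht, hψM m hm, mul_one, mul_inv_rev, ← mul_assoc]
    exact (socle_normal _).conj_mem _ (inv_mem (hTS t ht)) _
  let e : G ⧸ ψ.ker ≃* G ⧸ N := QuotientGroup.quotientKerEquivOfSurjective ψ hψs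
  have hmem : ψ.ker ∈ crownNormals a := by
    refine ⟨inferInstance, ?_, ?_, ?_⟩
    · intro h
      obtain ⟨i⟩ := hab h
      exact ⟨e.trans i⟩
    · intro h
      obtain ⟨i⟩ := hnab h
      exact ⟨e.trans i⟩
    · exact gEquiv_trans (gEquiv_socAct e (QuotientGroup.mk' ψ.ker) π hψπ) hE
  have hRψ : crownRadical a ≤ ψ.ker := sInf_le hmem
  apply hRM
  intro r hr
  have hg : r ∈ M ⊔ T := by rw [hMT]; trivial
  obtain ⟨m, hm, t, ht, rfl⟩ := Subgroup.mem_sup_of_normal_right.1 hg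
  have h1 : ψ (m * t) = 1 := hRψ hr
  rw [map_mul, hψT t ht, hψM m hm, mul_one] at h1
  have h2 : π (m * t) = 1 := (hπ1 _).2 (hRN hr)
  rw [map_mul, h1, one_mul] at h2
  exact mul_mem hm (hTNM ⟨ht, (hπ1 t).1 h2⟩)

end ChebotarevPaper
end

section
/- Let G be a finite group with trivial Frattini subgroup, and let V be a chief factor of G and U a nontrivial normal subgroup of G with I_G(V) = R_G(V) × U. Then C(G) ≤ C(G/U) + Σ_{k=0}^{∞} P*_{G,V}(k). -/
/-!
Definitions supporting the formalization of
"An upper bound on the Chebotarev invariant of a finite group" (Lucchini–Tracey).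
-/

open scoped BigOperators

namespace ChebotarevPaper

variable (G : Type*) [Group G]

variable {G}

/-! ### Equivalence of `G`-groups via cocycles -/

theorem gequiv_of_cocycle {G : Type*} [Group G] {V₁ V₂ : Type*} [Group V₁] [Group V₂]
    {a₁ : G →* MulAut V₁} {a₂ : G →* MulAut V₂} (φ : V₁ ≃* V₂) (β : G → V₂)
    (hβ : ∀ g h, β (g * h) = β g * a₂ g (β h))
    (hφ : ∀ g v, φ (a₁ g v) = β g * a₂ g (φ v) * (β g)⁻¹) : GEquiv G a₁ a₂ := by
  have hβ1 : β 1 = 1 := by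
    have := hβ 1 1
    simpa using this
  refine ⟨φ, MulEquiv.mk'
    { toFun := fun x => ⟨φ x.left * β x.right, x.right⟩
      invFun := fun x => ⟨φ.symm (x.left * (β x.right)⁻¹), x.right⟩
      left_inv := fun x => by ext <;> simp
      right_inv := fun x => by ext <;> simp } ?_, ?_, ?_⟩
  · intro x y
    ext
    · simp [hβ, hφ, mul_assoc]
    · simp
  · intro v
    ext
    · change φ v * β 1 = φ v
      rw [hβ1, mul_one]
    · rfl
  · intro x
    rfl

theorem cocycle_of_gequiv {G : Type*} [Group G] {V₁ V₂ : Type*} [Group V₁] [Group V₂]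
    {a₁ : G →* MulAut V₁} {a₂ : G →* MulAut V₂} (h : GEquiv G a₁ a₂) :
    ∃ (φ : V₁ ≃* V₂) (β : G → V₂),
      (∀ g h, β (g * h) = β g * a₂ g (β h)) ∧
      (∀ g v, φ (a₁ g v) = β g * a₂ g (φ v) * (β g)⁻¹) := by
  obtain ⟨φ, Φ, h1, h2⟩ := h
  have key : ∀ g, Φ (SemidirectProduct.inr g) = ⟨(Φ (SemidirectProduct.inr g)).left, g⟩ := by
    intro g
    ext
    · rfl
    · simp [h2]
  refine ⟨φ, fun g => (Φ (SemidirectProduct.inr g)).left, ?_, ?_⟩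
  · intro g h
    have e : Φ (SemidirectProduct.inr (g * h)) =
        Φ (SemidirectProduct.inr g) * Φ (SemidirectProduct.inr h) := by
      rw [← map_mul, ← map_mul]
    have e' := congrArg SemidirectProduct.left e
    rw [SemidirectProduct.mul_left, h2] at e'
    simpa using e'
  · intro g v
    have e : (SemidirectProduct.inl (a₁ g v) : V₁ ⋊[a₁] G) * SemidirectProduct.inr g =
        SemidirectProduct.inr g * SemidirectProduct.inl v := by
      ext <;> simp
    have e2 := congrArg Φ e
    rw [map_mul, map_mul, h1, h1] at e2
    have e' := congrArg SemidirectProduct.left e2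
    rw [SemidirectProduct.mul_left, SemidirectProduct.mul_left, h2] at e'
    simp at e'
    rw [eq_mul_inv_iff_mul_eq]
    exact e'

theorem gequiv_symm {G : Type*} [Group G] {V₁ V₂ : Type*} [Group V₁] [Group V₂]
    {a₁ : G →* MulAut V₁} {a₂ : G →* MulAut V₂} (h : GEquiv G a₁ a₂) : GEquiv G a₂ a₁ := by
  obtain ⟨φ, Φ, h1, h2⟩ := h
  refine ⟨φ.symm, Φ.symm, fun v => ?_, fun x => ?_⟩
  · rw [MulEquiv.symm_apply_eq, h1]; simp
  · rw [← h2 (Φ.symm x)]; simp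

theorem gequiv_trans {G : Type*} [Group G] {V₁ V₂ V₃ : Type*} [Group V₁] [Group V₂] [Group V₃]
    {a₁ : G →* MulAut V₁} {a₂ : G →* MulAut V₂} {a₃ : G →* MulAut V₃}
    (h : GEquiv G a₁ a₂) (h' : GEquiv G a₂ a₃) : GEquiv G a₁ a₃ := by
  obtain ⟨φ, Φ, h1, h2⟩ := h
  obtain ⟨φ', Φ', h1', h2'⟩ := h'
  exact ⟨φ.trans φ', Φ.trans Φ', fun v => by simp [h1, h1'], fun x => by simp [h2, h2']⟩

/-- conjugation action of `G` through `π` on a normal subgroup. -/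
def nact {G Q : Type*} [Group G] [Group Q] (π : G →* Q) (P : Subgroup Q) [P.Normal] :
    G →* MulAut P := MulAut.conjNormal.comp π

theorem nact_coe {G Q : Type*} [Group G] [Group Q] (π : G →* Q) (P : Subgroup Q) [P.Normal]
    (g : G) (p : P) : ((nact π P g p : P) : Q) = π g * p * (π g)⁻¹ := rfl

theorem gequiv_of_common {G Q Q' : Type*} [Group G] [Group Q] [Group Q']
    (π : G →* Q) (ρ : G →* Q') (B : Subgroup G) (hB : B.Normal)
    (P : Subgroup Q) [P.Normal] (P' : Subgroup Q') [P'.Normal]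
    (hP : P = B.map π) (hP' : P' = B.map ρ)
    (hk : ∀ b ∈ B, π b = 1 ↔ ρ b = 1) : GEquiv G (nact π P) (nact ρ P') := by
  have h1 : ∀ p : P, ∃ b ∈ B, π b = p := fun p => by
    have : (p : Q) ∈ B.map π := hP ▸ p.2
    exact this
  choose s hsB hs using h1
  have hwd : ∀ b ∈ B, ∀ c ∈ B, π b = π c ↔ ρ b = ρ c := by
    intro b hb c hc
    have := hk (b * c⁻¹) (B.mul_mem hb (B.inv_mem hc))
    simpa [mul_inv_eq_one] using this
  have hmem : ∀ b ∈ B, ρ b ∈ P' := fun b hb => by rw [hP']; exact ⟨b, hb, rfl⟩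
  let f : P →* P' := MonoidHom.mk' (fun p => ⟨ρ (s p), hmem _ (hsB p)⟩) (by
    intro p q
    ext
    simp only [Subgroup.coe_mul]
    rw [← map_mul, ← hwd _ (hsB _) _ (B.mul_mem (hsB _) (hsB _)), map_mul, hs, hs, hs]
    rfl)
  have hf : ∀ (p : P) (b : G), b ∈ B → π b = p → ((f p : P') : Q') = ρ b := by
    intro p b hb hbp
    change ρ (s p) = ρ b
    rw [← hwd _ (hsB _) _ hb, hs, hbp]
  have hbij : Function.Bijective f := by
    constructor
    · rw [injective_iff_map_eq_one]
      intro p hp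
      have : ρ (s p) = 1 := congrArg Subtype.val hp
      rw [← hk _ (hsB p), hs] at this
      exact Subtype.ext this
    · intro q
      have : (q : Q') ∈ B.map ρ := hP' ▸ q.2
      obtain ⟨b, hb, hbq⟩ := this
      have hb' : π b ∈ P := by rw [hP]; exact ⟨b, hb, rfl⟩
      refine ⟨⟨π b, hb'⟩, Subtype.ext ?_⟩
      rw [hf _ b hb rfl, hbq]
  refine gequiv_of_cocycle (MulEquiv.ofBijective f hbij) (fun _ => 1) (by simp) ?_
  intro g v
  ext
  simp only [MulEquiv.ofBijective_apply, one_mul, inv_one, mul_one]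
  rw [hf _ (g * s v * g⁻¹) (hB.conj_mem _ (hsB v) g) (by rw [nact_coe]; simp [hs]), nact_coe,
    hf v (s v) (hsB v) (hs v)]
  simp

/-! ### Minimal normal subgroups -/

theorem exists_minimalNormal_le_s8 {Q : Type*} [Group Q] [Finite Q] (P : Subgroup Q)
    (hP : P.Normal) (hne : P ≠ ⊥) : ∃ A ≤ P, IsMinimalNormal Q A := by
  obtain ⟨A, hA⟩ := (Set.toFinite {A : Subgroup Q | A.Normal ∧ A ≠ ⊥ ∧ A ≤ P}).exists_minimal
    ⟨P, hP, hne, le_rfl⟩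
  refine ⟨A, hA.1.2.2, hA.1.1, hA.1.2.1, fun M hM hM' hMA => ?_⟩
  exact le_antisymm hMA (hA.2 ⟨hM, hM', hMA.trans hA.1.2.2⟩ hMA)

theorem minimalNormal_inf {Q : Type*} [Group Q] {A N : Subgroup Q} (hA : IsMinimalNormal Q A)
    (hN : N.Normal) : A ≤ N ∨ A ⊓ N = ⊥ := by
  by_cases h : A ⊓ N = ⊥
  · exact Or.inr h
  · left
    have := hA.1
    have := hA.2.2 (A ⊓ N) inferInstance h inf_le_left
    exact inf_eq_left.1 this

theorem minimalNormal_inf_bot {Q : Type*} [Group Q] {A B : Subgroup Q} (hA : IsMinimalNormal Q A)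
    (hB : IsMinimalNormal Q B) (hne : A ≠ B) : A ⊓ B = ⊥ := by
  rcases minimalNormal_inf hA hB.1 with h | h
  · exact absurd (hB.2.2 A hA.1 hA.2.1 h) hne
  · exact h

theorem commute_of_inf_bot {Q : Type*} [Group Q] {A B : Subgroup Q} (hA : A.Normal)
    (hB : B.Normal) (h : A ⊓ B = ⊥) {x y : Q} (hx : x ∈ A) (hy : y ∈ B) : x * y = y * x :=
  Subgroup.commute_of_normal_of_disjoint A B hA hB (disjoint_iff.2 h) x y hx hy

theorem socle_map_le {Q Q' : Type*} [Group Q] [Group Q'] (f : Q →* Q')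
    (hf : Function.Surjective f) : (socle Q).map f ≤ socle Q' := by
  rw [Subgroup.map_le_iff_le_comap, socle]
  refine sSup_le fun L hL => ?_
  rw [← Subgroup.map_le_iff_le_comap]
  by_cases h : L.map f = ⊥
  · rw [h]; exact bot_le
  · refine le_sSup ⟨hL.1.map f hf, h, fun M hM hMne hML => le_antisymm hML ?_⟩
    have := hL.1
    have hn : (L ⊓ M.comap f).Normal := inferInstance
    have := hL.2.2 _ hn (fun hb => hMne ?_) inf_le_left
    · rw [Subgroup.map_le_iff_le_comap]
      exact inf_eq_left.1 this
    · rw [eq_bot_iff]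
      intro x hx
      obtain ⟨l, hl, rfl⟩ := hML hx
      have : l ∈ L ⊓ M.comap f := ⟨hl, hx⟩
      rw [hb, Subgroup.mem_bot] at this
      simp [this]

/-! ### Chief factors are irreducible -/

theorem irreducible_of_chief {G : Type*} [Group G] {V : Type*} [Group V] {a : G →* MulAut V}
    {X Y : Subgroup G} (hchief : IsChiefFactorPair G X Y) (hrep : RepresentsFactor G a X Y) :
    IsIrreducibleGGroup G a := by
  obtain ⟨hX, hY, hlt, hmin⟩ := hchief
  obtain ⟨f, hsurj, hker, heq⟩ := hrep
  constructor
  · obtain ⟨x, hx, hxy⟩ := SetLike.exists_of_lt hlt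
    exact ⟨f ⟨x, hx⟩, 1, fun h => hxy ((hker ⟨x, hx⟩).1 h)⟩
  · intro W _ hW
    have hn : ((W.comap f).map X.subtype).Normal := by
      constructor
      rintro _ ⟨x, hx, rfl⟩ g
      refine ⟨⟨g * x * g⁻¹, hX.conj_mem _ x.2 g⟩, ?_, rfl⟩
      change f _ ∈ W
      rw [heq g x _ rfl]
      exact hW g _ hx
    have hle1 : Y ≤ (W.comap f).map X.subtype := by
      intro y hy
      refine ⟨⟨y, hlt.le hy⟩, ?_, rfl⟩
      change f _ ∈ W
      rw [(hker _).2 hy]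
      exact W.one_mem
    have hle2 : (W.comap f).map X.subtype ≤ X := by
      rintro _ ⟨x, _, rfl⟩
      exact x.2
    rcases hmin _ hn hle1 hle2 with h | h
    · left
      rw [eq_bot_iff]
      intro w hw
      obtain ⟨x, rfl⟩ := hsurj w
      have : (x : G) ∈ (W.comap f).map X.subtype := ⟨x, hw, rfl⟩
      rw [h] at this
      exact (hker x).2 this
    · right
      rw [eq_top_iff]
      intro w _
      obtain ⟨x, rfl⟩ := hsurj w
      have : (x : G) ∈ (W.comap f).map X.subtype := by rw [h]; exact x.2
      obtain ⟨x', hx', h'⟩ := this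
      have : x' = x := Subtype.ext h'
      exact this ▸ hx'

theorem normal_le_of_gequiv {G Q : Type*} [Group G] [Group Q] {V : Type*} [Group V]
    {a : G →* MulAut V} (hirr : IsIrreducibleGGroup G a) (π : G →* Q)
    (S : Subgroup Q) [S.Normal] (h : GEquiv G (nact π S) a)
    (P : Subgroup Q) (hP : P.Normal) (hPS : P ≤ S) : P = ⊥ ∨ P = S := by
  obtain ⟨φ, β, -, hφ⟩ := cocycle_of_gequiv h
  have hWn : ((P.subgroupOf S).map φ.toMonoidHom).Normal :=
    (inferInstance : (P.subgroupOf S).Normal).map _ φ.surjective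
  have key : (P.subgroupOf S).map φ.toMonoidHom = ⊥ ∨
      (P.subgroupOf S).map φ.toMonoidHom = ⊤ := by
    refine hirr.2 _ hWn ?_
    rintro g _ ⟨s, hs, rfl⟩
    have h1 : φ (nact π S g s) ∈ (P.subgroupOf S).map φ.toMonoidHom := by
      refine ⟨nact π S g s, ?_, rfl⟩
      change ((nact π S g s : S) : Q) ∈ P
      rw [nact_coe]
      exact hP.conj_mem _ hs _
    rw [hφ] at h1
    have h2 := hWn.conj_mem _ h1 (β g)⁻¹
    simpa [mul_assoc] using h2
  rcases key with h | h
  · left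
    rw [Subgroup.map_eq_bot_iff_of_injective _ φ.injective] at h
    rw [Subgroup.subgroupOf_eq_bot] at h
    rw [eq_bot_iff]
    exact fun x hx => h.le_bot ⟨hx, hPS hx⟩
  · right
    refine le_antisymm hPS fun x hx => ?_
    have : φ ⟨x, hx⟩ ∈ (P.subgroupOf S).map φ.toMonoidHom := by rw [h]; trivial
    obtain ⟨s, hs, hs'⟩ := this
    have : s = ⟨x, hx⟩ := φ.injective hs'
    rw [this] at hs
    exact hs

/-! ### Primitive groups -/

theorem exists_mul_of_not_le {Q : Type*} [Group Q] {M P : Subgroup Q} (hM : IsCoatom M)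
    (hP : P.Normal) (h : ¬ P ≤ M) (x : Q) : ∃ p ∈ P, p * x ∈ M := by
  have htop : M ⊔ P = ⊤ := hM.2 _ (lt_of_le_of_ne le_sup_left fun e => h (e ▸ le_sup_right))
  have hx : x ∈ P ⊔ M := by rw [sup_comm, htop]; trivial
  obtain ⟨p, hp, m, hm, rfl⟩ := Subgroup.mem_sup_of_normal_left.1 hx
  exact ⟨p⁻¹, P.inv_mem hp, by simpa using hm⟩

/-- In a primitive group the centralizer of a non-trivial normal subgroup meets a point
stabilizer trivially. -/
theorem inf_bot_of_commute {Q : Type*} [Group Q] {M : Subgroup Q} (hM : IsCoatom M)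
    (hcore : ∀ N : Subgroup Q, N.Normal → N ≤ M → N = ⊥) {P C : Subgroup Q} (hP : P.Normal)
    (hPne : P ≠ ⊥) (hC : C.Normal) (hcomm : ∀ x ∈ P, ∀ y ∈ C, x * y = y * x) : C ⊓ M = ⊥ := by
  refine hcore _ ⟨fun n hn g => ?_⟩ inf_le_right
  obtain ⟨p, hp, hm⟩ := exists_mul_of_not_le hM hP (fun h => hPne (hcore _ hP h)) g
  have h1 : (p * g) * n * (p * g)⁻¹ ∈ C ⊓ M :=
    ⟨hC.conj_mem _ hn.1 _, M.mul_mem (M.mul_mem hm hn.2) (M.inv_mem hm)⟩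
  have h2 : g * n * g⁻¹ ∈ C := hC.conj_mem _ hn.1 _
  have h3 : (p * g) * n * (p * g)⁻¹ = g * n * g⁻¹ := by
    have := hcomm p hp _ h2
    calc (p * g) * n * (p * g)⁻¹ = p * (g * n * g⁻¹) * p⁻¹ := by group
      _ = g * n * g⁻¹ := by rw [this]; group
  rwa [h3] at h1

theorem centralizer_le {Q : Type*} [Group Q] {M : Subgroup Q} (hM : IsCoatom M)
    (hcore : ∀ N : Subgroup Q, N.Normal → N ≤ M → N = ⊥) {P₁ P₂ : Subgroup Q}
    (h₁ : P₁.Normal) (h₁ne : P₁ ≠ ⊥) (h₂ : P₂.Normal) (h₂ne : P₂ ≠ ⊥)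
    (hcomm : ∀ x ∈ P₁, ∀ y ∈ P₂, x * y = y * x) {c : Q} (hc : ∀ x ∈ P₁, x * c = c * x) :
    c ∈ P₂ := by
  have hCn : (Subgroup.centralizer (P₁ : Set Q)).Normal := inferInstance
  have hC := inf_bot_of_commute hM hcore h₁ h₁ne hCn (fun x hx y hy => hy x hx)
  obtain ⟨p, hp, hm⟩ := exists_mul_of_not_le hM h₂ (fun h => h₂ne (hcore _ h₂ h)) c
  have : p * c ∈ Subgroup.centralizer (P₁ : Set Q) ⊓ M := by
    refine ⟨Subgroup.mul_mem _ ?_ ?_, hm⟩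
    · exact fun x hx => hcomm x hx p hp
    · exact fun x hx => hc x hx
  rw [hC, Subgroup.mem_bot] at this
  rw [← inv_eq_of_mul_eq_one_right this]
  exact P₂.inv_mem hp

theorem socle_eq_sup {Q : Type*} [Group Q] {M : Subgroup Q} (hM : IsCoatom M)
    (hcore : ∀ N : Subgroup Q, N.Normal → N ≤ M → N = ⊥) {P₁ P₂ : Subgroup Q}
    (h₁ : IsMinimalNormal Q P₁) (h₂ : IsMinimalNormal Q P₂) (hne : P₁ ≠ P₂) :
    socle Q = P₁ ⊔ P₂ := by
  refine le_antisymm (sSup_le fun P hP => ?_) (sup_le (le_sSup h₁) (le_sSup h₂))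
  by_cases h : P₁ = P
  · exact h ▸ le_sup_left
  · refine le_trans (fun c hc => ?_) le_sup_right
    exact centralizer_le hM hcore h₁.1 h₁.2.1 h₂.1 h₂.2.1
      (fun x hx y hy => commute_of_inf_bot h₁.1 h₂.1 (minimalNormal_inf_bot h₁ h₂ hne) hx hy)
      (fun x hx => commute_of_inf_bot h₁.1 hP.1 (minimalNormal_inf_bot h₁ hP h) hx hc)

theorem gequiv_two {G Q : Type*} [Group G] [Group Q] (π : G →* Q)
    {M : Subgroup Q} (hM : IsCoatom M)
    (hcore : ∀ N : Subgroup Q, N.Normal → N ≤ M → N = ⊥) {P₁ P₂ : Subgroup Q}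
    [h₁ : P₁.Normal] (h₁ne : P₁ ≠ ⊥) [h₂ : P₂.Normal] (h₂ne : P₂ ≠ ⊥)
    (hcomm : ∀ x ∈ P₁, ∀ y ∈ P₂, x * y = y * x) :
    GEquiv G (nact π P₁) (nact π P₂) := by
  have hi2 : P₂ ⊓ M = ⊥ := inf_bot_of_commute hM hcore h₁ h₁ne h₂ hcomm
  have hi1 : P₁ ⊓ M = ⊥ := inf_bot_of_commute hM hcore h₂ h₂ne h₁
    (fun x hx y hy => (hcomm y hy x hx).symm)
  have hex : ∀ x : Q, ∃ p : P₂, (p : Q) * x ∈ M := fun x => by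
    obtain ⟨p, hp, hm⟩ := exists_mul_of_not_le hM h₂ (fun h => h₂ne (hcore _ h₂ h)) x
    exact ⟨⟨p, hp⟩, hm⟩
  choose s hs using hex
  have huniq : ∀ (x : Q) (p : P₂), (p : Q) * x ∈ M → s x = p := by
    intro x p hp
    have h3 : (s x : Q) * (p : Q)⁻¹ ∈ P₂ ⊓ M := by
      refine ⟨P₂.mul_mem (s x).2 (P₂.inv_mem p.2), ?_⟩
      have := M.mul_mem (hs x) (M.inv_mem hp)
      simpa [mul_assoc] using this
    rw [hi2, Subgroup.mem_bot, mul_inv_eq_one] at h3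
    exact Subtype.ext h3
  let f : P₁ →* P₂ := MonoidHom.mk' (fun p => s p) (by
    intro p q
    refine huniq _ _ ?_
    have := M.mul_mem (hs p) (hs q)
    have e : (s p : Q) * (p : Q) * ((s q : Q) * (q : Q)) =
        (s p * s q : P₂) * ((p * q : P₁) : Q) := by
      have := hcomm p p.2 (s q) (s q).2
      simp only [Subgroup.coe_mul]
      calc (s p : Q) * (p : Q) * ((s q : Q) * (q : Q))
          = s p * ((p : Q) * s q) * q := by group
        _ = _ := by rw [this]; group
    rwa [e] at this)
  have hf : ∀ p : P₁, f p = s p := fun _ => rfl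
  have hbij : Function.Bijective f := by
    constructor
    · rw [injective_iff_map_eq_one]
      intro p hp
      have := hs p
      rw [← hf, hp] at this
      have h3 : (p : Q) ∈ P₁ ⊓ M := ⟨p.2, by simpa using this⟩
      rw [hi1, Subgroup.mem_bot] at h3
      exact Subtype.ext h3
    · intro q
      obtain ⟨p, hp, hm⟩ := exists_mul_of_not_le hM h₁ (fun h => h₁ne (hcore _ h₁ h)) (q : Q)
      refine ⟨⟨p, hp⟩, ?_⟩
      rw [hf]
      refine huniq _ _ ?_
      rw [← hcomm p hp q q.2]
      exact hm
  refine gequiv_of_cocycle (MulEquiv.ofBijective f hbij) (fun g => s (π g)) ?_ ?_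
  · intro g h
    refine huniq _ _ ?_
    have := M.mul_mem (hs (π g)) (hs (π h))
    simpa [nact_coe, mul_assoc] using this
  · intro g v
    simp only [MulEquiv.ofBijective_apply]
    rw [hf, hf]
    refine huniq _ _ ?_
    have h1 := M.mul_mem (M.mul_mem (hs (π g)) (hs v)) (M.inv_mem (hs (π g)))
    have h2 : (s (π g) : Q) * (π g * v * (π g)⁻¹) = (π g * v * (π g)⁻¹) * s (π g) :=
      (hcomm _ (h₁.conj_mem _ v.2 _) _ (s (π g)).2).symm
    have e : (s (π g) : Q) * π g * (s v * v) * (s (π g) * π g)⁻¹ =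
        ((s (π g) * nact π P₂ g (s v) * (s (π g))⁻¹ : P₂) : Q) * (nact π P₁ g v : P₁) := by
      simp only [Subgroup.coe_mul, nact_coe, Subgroup.coe_inv]
      have h3 : ((s (π g) : Q))⁻¹ * (π g * v * (π g)⁻¹) = (π g * v * (π g)⁻¹) * (s (π g) : Q)⁻¹ := by
        rw [inv_mul_eq_iff_eq_mul, ← mul_assoc, h2]; group
      rw [mul_assoc _ ((s (π g) : Q))⁻¹, h3]
      group
    rwa [e] at h1

theorem gequiv_prod {G Q : Type*} [Group G] [Group Q] (π : G →* Q) {V : Type*} [Group V]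
    {a : G →* MulAut V} {S P₁ P₂ : Subgroup Q} [S.Normal] [P₁.Normal] [P₂.Normal]
    (hS : S = P₁ ⊔ P₂) (hinf : P₁ ⊓ P₂ = ⊥)
    (hcomm : ∀ x ∈ P₁, ∀ y ∈ P₂, x * y = y * x)
    (e₁ : GEquiv G (nact π P₁) a) (e₂ : GEquiv G (nact π P₂) a) :
    GEquiv G (nact π S) (prodAct G a) := by
  obtain ⟨φ₁, β₁, hβ₁, hφ₁⟩ := cocycle_of_gequiv e₁
  obtain ⟨φ₂, β₂, hβ₂, hφ₂⟩ := cocycle_of_gequiv e₂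
  have hm : ∀ p : P₁ × P₂, (p.1 : Q) * p.2 ∈ S := fun p => by
    rw [hS]
    exact Subgroup.mul_mem _ (Subgroup.mem_sup_left p.1.2) (Subgroup.mem_sup_right p.2.2)
  let f : P₁ × P₂ →* S := MonoidHom.mk' (fun p => ⟨(p.1 : Q) * p.2, hm p⟩) (by
    intro p q
    ext
    simp only [Prod.fst_mul, Prod.snd_mul, Subgroup.coe_mul]
    have := hcomm q.1 q.1.2 p.2 p.2.2
    calc (p.1 : Q) * q.1 * (p.2 * q.2) = p.1 * ((q.1 : Q) * p.2) * q.2 := by group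
      _ = _ := by rw [this]; group)
  have hf : ∀ p, ((f p : S) : Q) = (p.1 : Q) * p.2 := fun _ => rfl
  have hbij : Function.Bijective f := by
    constructor
    · rw [injective_iff_map_eq_one]
      intro p hp
      have h0 : (p.1 : Q) * p.2 = 1 := congrArg Subtype.val hp
      have h1 : (p.1 : Q) ∈ P₁ ⊓ P₂ :=
        ⟨p.1.2, by rw [eq_inv_of_mul_eq_one_left h0]; exact P₂.inv_mem p.2.2⟩
      rw [hinf, Subgroup.mem_bot] at h1
      rw [h1, one_mul] at h0
      exact Prod.ext (Subtype.ext h1) (Subtype.ext h0)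
    · intro q
      have hq : (q : Q) ∈ P₁ ⊔ P₂ := hS ▸ q.2
      obtain ⟨x, hx, y, hy, hxy⟩ := Subgroup.mem_sup_of_normal_left.1 hq
      exact ⟨(⟨x, hx⟩, ⟨y, hy⟩), Subtype.ext hxy⟩
  let ψ := MulEquiv.ofBijective f hbij
  refine gequiv_of_cocycle (ψ.symm.trans (MulEquiv.prodCongr φ₁ φ₂)) (fun g => (β₁ g, β₂ g)) ?_ ?_
  · intro g h
    exact Prod.ext (hβ₁ g h) (hβ₂ g h)
  · intro g v
    obtain ⟨p, rfl⟩ := ψ.surjective v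
    have e : nact π S g (ψ p) = ψ (nact π P₁ g p.1, nact π P₂ g p.2) := by
      ext
      rw [nact_coe]
      change π g * ((p.1 : Q) * p.2) * (π g)⁻¹ = π g * p.1 * (π g)⁻¹ * (π g * p.2 * (π g)⁻¹)
      group
    rw [e]
    simp only [MulEquiv.trans_apply, MulEquiv.symm_apply_apply]
    exact Prod.ext (hφ₁ g p.1) (hφ₂ g p.2)

/-! ### The key statement: maximal subgroups not containing `U` -/

theorem maximal_mem_omega {G : Type*} [Group G] [Finite G] {V : Type*} [Group V]
    (a : G →* MulAut V) (hirr : IsIrreducibleGGroup G a)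
    (U : Subgroup G) [U.Normal] (hUI : U ≤ crownSocle a) (hRU : crownRadical a ⊓ U = ⊥)
    (M : Subgroup G) (hM : IsCoatom M) (hUM : ¬ U ≤ M) :
    GEquiv G (socAct G (QuotientGroup.mk' M.normalCore)) a ∨
      GEquiv G (socAct G (QuotientGroup.mk' M.normalCore)) (prodAct G a) := by
  set K := M.normalCore with hK
  set π := QuotientGroup.mk' K with hπ
  have hπs : Function.Surjective π := QuotientGroup.mk'_surjective K
  have hKM : K ≤ M := Subgroup.normalCore_le M
  have hker : ∀ x, π x = 1 ↔ x ∈ K := fun x => QuotientGroup.eq_one_iff x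
  have hcomapM : (M.map π).comap π = M := by
    rw [Subgroup.comap_map_eq, QuotientGroup.ker_mk', sup_eq_left]
    exact hKM
  -- the image of `M` is a core-free maximal subgroup
  have hM' : IsCoatom (M.map π) := by
    refine ⟨fun h => hM.1 ?_, fun L hL => ?_⟩
    · rw [← hcomapM, h, Subgroup.comap_top]
    · have : M < L.comap π :=
        lt_of_eq_of_lt hcomapM.symm ((Subgroup.comap_lt_comap_of_surjective hπs).2 hL)
      have := hM.2 _ this
      rw [← Subgroup.map_comap_eq_self_of_surjective hπs L, this,
        Subgroup.map_top_of_surjective _ hπs]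
  have hcore : ∀ N : Subgroup (G ⧸ K), N.Normal → N ≤ M.map π → N = ⊥ := by
    intro N hN hNM
    have h1 : N.comap π ≤ M := (Subgroup.comap_mono hNM).trans hcomapM.le
    have h2 : N.comap π ≤ K := (Subgroup.normal_le_normalCore).2 h1
    rw [eq_bot_iff]
    intro x hx
    obtain ⟨y, rfl⟩ := hπs x
    exact (hker y).2 (h2 hx)
  have hUn : (U.map π).Normal := (inferInstance : U.Normal).map π hπs
  have hUne : U.map π ≠ ⊥ := by
    intro h
    apply hUM
    refine le_trans (fun u hu => ?_) hKM
    rw [← hker]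
    have : π u ∈ U.map π := ⟨u, hu, rfl⟩
    rwa [h, Subgroup.mem_bot] at this
  obtain ⟨A, hAU, hA⟩ := exists_minimalNormal_le_s8 _ hUn hUne
  have := hA.1
  -- `A` is `G`-equivalent to `V`
  have hAV : GEquiv G (nact π A) a := by
    obtain ⟨B, hB⟩ := (Set.toFinite {B : Subgroup G | B.Normal ∧ B ≤ A.comap π ⊓ U ∧
      ¬ B ≤ K}).exists_minimal ⟨A.comap π ⊓ U, inferInstance, le_rfl, by
        intro h
        apply hA.2.1
        rw [eq_bot_iff]
        intro x hx
        obtain ⟨u, hu, rfl⟩ := hAU hx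
        exact (hker u).2 (h ⟨hx, hu⟩)⟩
    obtain ⟨⟨hBn, hBle, hBK⟩, hBmin⟩ := hB
    have hBU : B ≤ U := hBle.trans inf_le_right
    have hBR : ¬ B ≤ crownRadical a := by
      intro h
      apply hBK
      have : B ≤ ⊥ := hRU ▸ le_inf h hBU
      exact this.trans bot_le
    obtain ⟨N, hN, hBN⟩ : ∃ N ∈ crownNormals a, ¬ B ≤ N := by
      by_contra hcon
      push Not at hcon
      exact hBR (le_sInf hcon)
    have hRN : crownRadical a ≤ N := sInf_le hN
    obtain ⟨hNn, -, -, hNV⟩ := hN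
    set ρ := QuotientGroup.mk' N with hρ
    have hρs : Function.Surjective ρ := QuotientGroup.mk'_surjective N
    have hkerρ : ∀ x, ρ x = 1 ↔ x ∈ N := fun x => QuotientGroup.eq_one_iff x
    have hNV' : GEquiv G (nact ρ (socle (G ⧸ N))) a := hNV
    -- the image of `B` in `G ⧸ N` is the socle
    have hBsoc : B.map ρ ≤ socle (G ⧸ N) := by
      let f : G ⧸ crownRadical a →* G ⧸ N := QuotientGroup.map _ _ (MonoidHom.id G) hRN
      have hf : Function.Surjective f := by
        intro x
        obtain ⟨g, rfl⟩ := hρs x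
        exact ⟨QuotientGroup.mk' _ g, rfl⟩
      rintro _ ⟨b, hb, rfl⟩
      have h1 : QuotientGroup.mk' (crownRadical a) b ∈ socle (G ⧸ crownRadical a) :=
        hUI (hBU hb)
      exact socle_map_le f hf ⟨_, h1, rfl⟩
    have hirrN := normal_le_of_gequiv hirr ρ (socle (G ⧸ N)) hNV'
    have hBρ : socle (G ⧸ N) = B.map ρ := by
      rcases hirrN _ (hBn.map ρ hρs) hBsoc with h | h
      · exfalso
        apply hBN
        intro b hb
        rw [← hkerρ]
        have : ρ b ∈ B.map ρ := ⟨b, hb, rfl⟩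
        rwa [h, Subgroup.mem_bot] at this
      · exact h.symm
    have hBπ : A = B.map π := by
      symm
      refine hA.2.2 _ (hBn.map π hπs) ?_ ?_
      · intro h
        apply hBK
        intro b hb
        rw [← hker]
        have : π b ∈ B.map π := ⟨b, hb, rfl⟩
        rwa [h, Subgroup.mem_bot] at this
      · rw [Subgroup.map_le_iff_le_comap]
        exact hBle.trans inf_le_left
    have hNK : B ⊓ N ≤ K := by
      by_contra hcon
      have := hBmin ⟨inferInstance, inf_le_left.trans hBle, hcon⟩ inf_le_left
      exact hBN (this.trans inf_le_right)
    have hKN : B ⊓ K ≤ N := by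
      have hn : (B ⊓ K).Normal := inferInstance
      rcases hirrN ((B ⊓ K).map ρ) (hn.map ρ hρs)
        ((Subgroup.map_mono inf_le_left).trans hBsoc) with h | h
      · intro b hb
        rw [← hkerρ]
        have : ρ b ∈ (B ⊓ K).map ρ := ⟨b, hb, rfl⟩
        rwa [h, Subgroup.mem_bot] at this
      · exfalso
        apply hBK
        intro b hb
        have : ρ b ∈ (B ⊓ K).map ρ := by rw [h, hBρ]; exact ⟨b, hb, rfl⟩
        obtain ⟨c, hc, hcb⟩ := this
        have h1 : b * c⁻¹ ∈ B ⊓ N := by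
          refine ⟨B.mul_mem hb (B.inv_mem hc.1), ?_⟩
          change b * c⁻¹ ∈ N
          rw [← hkerρ, map_mul, map_inv, hcb, mul_inv_cancel]
        have h2 := K.mul_mem (hNK h1) hc.2
        simpa using h2
    refine gequiv_trans (gequiv_of_common π ρ B hBn A (socle (G ⧸ N)) hBπ hBρ ?_) hNV'
    intro b hb
    rw [hker, hkerρ]
    exact ⟨fun h => hKN ⟨hb, h⟩, fun h => hNK ⟨hb, h⟩⟩
  change GEquiv G (nact π (socle (G ⧸ K))) a ∨ GEquiv G (nact π (socle (G ⧸ K))) (prodAct G a)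
  by_cases hex : ∃ C, IsMinimalNormal (G ⧸ K) C ∧ A ≠ C
  · right
    obtain ⟨C, hC, hAC⟩ := hex
    have := hC.1
    have hinf := minimalNormal_inf_bot hA hC hAC
    have hcomm : ∀ x ∈ A, ∀ y ∈ C, x * y = y * x :=
      fun x hx y hy => commute_of_inf_bot hA.1 hC.1 hinf hx hy
    have hCA := gequiv_symm (gequiv_two π hM' hcore hA.2.1 hC.2.1 hcomm)
    exact gequiv_prod π (socle_eq_sup hM' hcore hA hC hAC) hinf hcomm hAV
      (gequiv_trans hCA hAV)
  · left
    push Not at hex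
    have hs : socle (G ⧸ K) = A := by
      refine le_antisymm (sSup_le fun C hC => (hex C hC).ge) (le_sSup hA)
    have : ∀ (S : Subgroup (G ⧸ K)) [S.Normal], S = A → GEquiv G (nact π S) a := by
      intro S _ hS
      subst hS
      exact hAV
    exact this _ hs

/-! ### Probabilities and summability -/

/-- elements lying in some conjugate of `M`. -/
def conjSet {G : Type*} [Group G] (M : Subgroup G) : Set G := {g | ∃ x : G, x * g * x⁻¹ ∈ M}

theorem conjSet_ne_univ {G : Type*} [Group G] [Finite G] (M : Subgroup G) (hM : M ≠ ⊤) :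
    conjSet M ≠ Set.univ := by
  classical
  intro h
  have := Fintype.ofFinite G
  have := Fintype.ofFinite (G ⧸ M)
  have hb := MulAction.sum_card_fixedBy_eq_card_orbits_mul_card_group G (G ⧸ M)
  have ho : Fintype.card (Quotient (MulAction.orbitRel G (G ⧸ M))) = 1 := by
    rw [Fintype.card_eq_one_iff_nonempty_unique]
    have : Subsingleton (Quotient (MulAction.orbitRel G (G ⧸ M))) :=
      (MulAction.pretransitive_iff_subsingleton_quotient G (G ⧸ M)).1 inferInstance
    exact ⟨⟨⟨Quotient.mk'' (QuotientGroup.mk 1)⟩, fun _ => Subsingleton.elim _ _⟩⟩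
  rw [ho, one_mul] at hb
  have hpos : ∀ g : G, 1 ≤ Fintype.card (MulAction.fixedBy (G ⧸ M) g) := by
    intro g
    obtain ⟨x, hx⟩ : g ∈ conjSet M := h ▸ Set.mem_univ g
    refine Fintype.card_pos_iff.2 ⟨⟨QuotientGroup.mk x⁻¹, ?_⟩⟩
    change g • (QuotientGroup.mk x⁻¹ : G ⧸ M) = _
    rw [MulAction.Quotient.smul_mk, QuotientGroup.eq]
    have := M.inv_mem hx
    simpa [mul_assoc] using this
  have h1 : 1 < Fintype.card (MulAction.fixedBy (G ⧸ M) (1 : G)) := by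
    have e : MulAction.fixedBy (G ⧸ M) (1 : G) = Set.univ := by
      ext x; simp
    have : Nat.card (MulAction.fixedBy (G ⧸ M) (1 : G)) = M.index := by
      rw [e, Nat.card_univ]; rfl
    rw [← Nat.card_eq_fintype_card, this]
    have h0 : M.index ≠ 0 := Subgroup.index_ne_zero_of_finite
    have h1 : M.index ≠ 1 := fun h => hM (Subgroup.index_eq_one.1 h)
    omega
  have hlt : ∑ g : G, 1 < ∑ g : G, Fintype.card (MulAction.fixedBy (G ⧸ M) g) :=
    Finset.sum_lt_sum (fun g _ => hpos g) ⟨1, Finset.mem_univ _, h1⟩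
  rw [hb] at hlt
  simp at hlt

/-- density of the set of tuples satisfying `p`. -/
noncomputable def dens {G : Type*} {k : ℕ} (p : (Fin k → G) → Prop) : ℝ :=
  Nat.card {f : Fin k → G // p f} / (Nat.card G : ℝ) ^ k

theorem dens_nonneg {G : Type*} {k : ℕ} (p : (Fin k → G) → Prop) : 0 ≤ dens p := by
  unfold dens; positivity

theorem dens_mono {G : Type*} [Finite G] {k : ℕ} {p q : (Fin k → G) → Prop}
    (h : ∀ f, p f → q f) : dens p ≤ dens q := by
  unfold dens
  gcongr
  exact Nat.card_mono (Set.toFinite {f | q f}) (fun f hf => h f hf)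

theorem dens_or {G : Type*} [Finite G] {k : ℕ} (p q : (Fin k → G) → Prop) :
    dens (fun f => p f ∨ q f) ≤ dens p + dens q := by
  unfold dens
  rw [← add_div]
  gcongr
  exact_mod_cast Set.ncard_union_le {f | p f} {f | q f}

theorem dens_exists {G : Type*} [Finite G] {k : ℕ} {ι : Type*} (s : Finset ι)
    (p : ι → (Fin k → G) → Prop) :
    dens (fun f => ∃ i ∈ s, p i f) ≤ ∑ i ∈ s, dens (p i) := by
  classical
  induction s using Finset.induction_on with
  | empty => simp [dens]
  | insert i s hi ih =>
    rw [Finset.sum_insert hi]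
    refine le_trans (dens_mono (q := fun f => p i f ∨ ∃ i ∈ s, p i f) ?_)
      ((dens_or _ _).trans (by gcongr))
    rintro f ⟨j, hj, hf⟩
    rcases Finset.mem_insert.1 hj with rfl | hj
    · exact Or.inl hf
    · exact Or.inr ⟨j, hj, hf⟩

theorem dens_not {G : Type*} [Finite G] [Nonempty G] {k : ℕ} (p : (Fin k → G) → Prop) :
    1 - dens p = dens (fun f => ¬ p f) := by
  unfold dens
  have hpos : (0 : ℝ) < (Nat.card G : ℝ) ^ k := by
    have : 0 < Nat.card G := Nat.card_pos
    positivity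
  have h : Nat.card {f // p f} + Nat.card {f // ¬ p f} = Nat.card G ^ k := by
    classical
    have := Nat.card_congr (Equiv.sumCompl p)
    rw [Nat.card_sum, Nat.card_fun] at this
    simpa using this
  have h' : (Nat.card {f // p f} : ℝ) + Nat.card {f // ¬ p f} = (Nat.card G : ℝ) ^ k := by
    exact_mod_cast h
  rw [eq_div_iff hpos.ne', sub_mul, div_mul_cancel₀ _ hpos.ne']
  linarith

theorem dens_pi {G : Type*} [Finite G] {k : ℕ} (s : Set G) :
    dens (fun f : Fin k → G => ∀ i, f i ∈ s) = ((Nat.card s : ℝ) / Nat.card G) ^ k := by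
  unfold dens
  rw [Nat.card_congr (Equiv.subtypePiEquivPi (p := fun _ x => x ∈ s)), div_pow, Nat.card_pi]
  simp

theorem dens_quotient {G : Type*} [Group G] [Finite G] (U : Subgroup G) [U.Normal] {k : ℕ}
    (p : (Fin k → G ⧸ U) → Prop) :
    dens (fun f : Fin k → G => p (fun i => (f i : G ⧸ U))) = dens p := by
  have hcard : Nat.card G = Nat.card (G ⧸ U) * Nat.card U :=
    Subgroup.card_eq_card_quotient_mul_card_subgroup U
  let e0 : G ≃ (G ⧸ U) × U :=
    { toFun := fun g => ((g : G ⧸ U), ⟨(Quotient.out (g : G ⧸ U))⁻¹ * g, by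
        rw [← QuotientGroup.eq]; exact Quotient.out_eq' _⟩)
      invFun := fun x => Quotient.out x.1 * x.2
      left_inv := fun g => by simp
      right_inv := fun x => by
        have : ((Quotient.out x.1 * (x.2 : G) : G) : G ⧸ U) = x.1 := by
          rw [QuotientGroup.mk_mul_of_mem _ x.2.2]; exact Quotient.out_eq' _
        ext
        · exact this
        · simp only [this]; simp }
  let e1 : (Fin k → G) ≃ (Fin k → G ⧸ U) × (Fin k → U) :=
    (Equiv.arrowCongr (Equiv.refl _) e0).trans (Equiv.arrowProdEquivProdArrow _ _ _)
  have e2 : {f : Fin k → G // p (fun i => (f i : G ⧸ U))} ≃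
      {f : Fin k → G ⧸ U // p f} × (Fin k → U) :=
    (e1.subtypeEquiv (q := fun x => p x.1) (fun f => Iff.rfl)).trans
      (Equiv.prodSubtypeFstEquivSubtypeProd)
  unfold dens
  rw [Nat.card_congr e2, Nat.card_prod, hcard]
  have hU : (Nat.card U : ℝ) ≠ 0 := by exact_mod_cast Nat.card_pos.ne'
  have hQ : (Nat.card (G ⧸ U) : ℝ) ≠ 0 := by exact_mod_cast Nat.card_pos.ne'
  have : Nat.card (Fin k → U) = Nat.card U ^ k := by rw [Nat.card_fun]; simp
  rw [this]
  push_cast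
  field_simp
  ring

/-- some maximal subgroup meets the conjugacy classes of all `f i`. -/
def Bad {G : Type*} [Group G] {k : ℕ} (f : Fin k → G) : Prop :=
  ∃ M : Subgroup G, IsCoatom M ∧ ∀ i, ∃ x : G, x * f i * x⁻¹ ∈ M

theorem bad_of_not_invGen {G : Type*} [Group G] [Finite G] {k : ℕ} {f : Fin k → G}
    (h : ¬ InvGen G f) : Bad f := by
  unfold InvGen at h
  push Not at h
  obtain ⟨c, hc⟩ := h
  obtain ⟨M, hM, hle⟩ := (eq_top_or_exists_le_coatom _).resolve_left hc
  exact ⟨M, hM, fun i => ⟨c i, hle (Subgroup.subset_closure ⟨i, rfl⟩)⟩⟩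

theorem not_invGen_of_le {G : Type*} [Group G] {k : ℕ} {f : Fin k → G}
    {M : Subgroup G} (hM : M ≠ ⊤) (h : ∀ i, ∃ x : G, x * f i * x⁻¹ ∈ M) : ¬ InvGen G f := by
  intro hf
  choose c hc using h
  apply hM
  rw [eq_top_iff, ← hf c, Subgroup.closure_le]
  rintro _ ⟨i, rfl⟩
  exact hc i

theorem summable_bad (G : Type*) [Group G] [Finite G] :
    Summable (fun k : ℕ => dens (fun f : Fin k → G => Bad f)) := by
  classical
  let s : Finset (Subgroup G) := (Set.toFinite {M : Subgroup G | IsCoatom M}).toFinset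
  have hs : ∀ M, M ∈ s ↔ IsCoatom M := fun M => by simp [s]
  have hsum : Summable (fun k : ℕ => ∑ M ∈ s, ((Nat.card (conjSet M) : ℝ) / Nat.card G) ^ k) := by
    refine summable_sum fun M hM => summable_geometric_of_lt_one (by positivity) ?_
    have hpos : (0 : ℝ) < Nat.card G := by exact_mod_cast Nat.card_pos
    rw [div_lt_one hpos]
    have : Nat.card (conjSet M) < Nat.card G := by
      rw [← Nat.card_univ (α := G)]
      exact Set.ncard_lt_ncard (Set.ssubset_univ_iff.2
        (conjSet_ne_univ M ((hs M).1 hM).1)) (Set.toFinite _)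
    exact_mod_cast this
  refine Summable.of_nonneg_of_le (fun k => dens_nonneg _) (fun k => ?_) hsum
  refine le_trans (dens_mono (q := fun f => ∃ M ∈ s, ∀ i, f i ∈ conjSet M) ?_)
    ((dens_exists s _).trans (Finset.sum_le_sum fun M _ => (dens_pi (conjSet M)).le))
  rintro f ⟨M, hM, h⟩
  exact ⟨M, (hs M).2 hM, h⟩

theorem cheb_term (G : Type*) [Group G] [Finite G] (k : ℕ) :
    1 - probInvGen G k = dens (fun f : Fin k → G => ¬ InvGen G f) :=
  dens_not _

theorem summable_cheb (G : Type*) [Group G] [Finite G] :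
    Summable (fun k : ℕ => 1 - probInvGen G k) := by
  refine Summable.of_nonneg_of_le (fun k => ?_) (fun k => ?_) (summable_bad G)
  · rw [cheb_term]; exact dens_nonneg _
  · rw [cheb_term]; exact dens_mono fun f hf => bad_of_not_invGen hf

theorem summable_pStar {G : Type*} [Group G] [Finite G] {V : Type*} [Group V]
    (a : G →* MulAut V) : Summable (fun k : ℕ => pStar a k) := by
  refine Summable.of_nonneg_of_le (fun k => ?_) (fun k => ?_) (summable_bad G)
  · exact dens_nonneg _
  · refine dens_mono (p := fun f => SatisfyVProperty a f) ?_
    rintro f ⟨M, hM, -, h⟩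
    exact ⟨M, hM, h⟩

/-- **Proposition 3.3(2)**: if `G` is a finite group with trivial Frattini subgroup and
`U`, `V` are as in Lemma 2.1 (`I_G(V) = R_G(V) × U`), then
`C(G) ≤ C(G/U) + Σ_{k≥0} P*_{G,V}(k)`. -/
theorem chebotarev_le_quotient_add_pStar (G : Type) [Group G] [Finite G]
    (hfrat : frattini G = ⊥)
    (V : Type) [Group V] (a : G →* MulAut V) (X Y : Subgroup G)
    (hchief : IsChiefFactorPair G X Y) (hrep : RepresentsFactor G a X Y)
    (U : Subgroup G) [U.Normal] (hUne : U ≠ ⊥)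
    (hcrown : crownSocle a = crownRadical a ⊔ U ∧ crownRadical a ⊓ U = ⊥) :
    cheb G ≤ cheb (G ⧸ U) + ∑' k : ℕ, pStar a k := by
  have hirr := irreducible_of_chief hchief hrep
  have hUI : U ≤ crownSocle a := by
    rw [hcrown.1]
    exact le_sup_right
  unfold cheb
  rw [← (summable_cheb (G ⧸ U)).tsum_add (summable_pStar a)]
  refine (summable_cheb G).tsum_le_tsum (fun k => ?_)
    ((summable_cheb (G ⧸ U)).add (summable_pStar a))
  rw [cheb_term, cheb_term, ← dens_quotient U]
  refine le_trans (dens_mono ?_) (dens_or _ (fun f => SatisfyVProperty a f))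
  intro f hf
  obtain ⟨M, hM, h⟩ := bad_of_not_invGen hf
  by_cases hUM : U ≤ M
  · left
    refine not_invGen_of_le (M := M.map (QuotientGroup.mk' U)) ?_ ?_
    · intro htop
      apply hM.1
      have h1 := congrArg (Subgroup.comap (QuotientGroup.mk' U)) htop
      rwa [Subgroup.comap_map_eq, QuotientGroup.ker_mk', sup_eq_left.2 hUM,
        Subgroup.comap_top] at h1
    · intro i
      obtain ⟨x, hx⟩ := h i
      exact ⟨x, _, hx, rfl⟩
  · right
    exact ⟨M, hM, maximal_mem_omega a hirr U hUI hcrown.2 M hM hUM, h⟩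

end ChebotarevPaper
end
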